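/- arXiv:1103.4906 — 8 statements merged into one kernel-verified Lean document; each statement's English description precedes it below -/
import Mathlib

section
/- Suppose α0 = α3/2, α1 = α3/2 and α2 = 1/4 − α3 (so the constraint α0+α1+2α2+α3 = 1/2 holds). Then the constant quadruple (q1,p1,q2,p2) = (0, 1/4, 0, 1/4) is a rational solution of A5^(2)(α3/2, α3/2, 1/4−α3, α3), and moreover every rational solution of A5^(2)(α3/2, α3/2, 1/4−α3, α3) equals (0, 1/4, 0, 1/4). -/
open Filter Topology Polynomial

/-- Evaluation of a rational function with complex coefficients at a point,
using its reduced numerator and denominator. -/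
noncomputable def evR (f : RatFunc ℂ) (t : ℂ) : ℂ := f.num.eval t / f.denom.eval t

/-- A rational function has no pole at `c` if its reduced denominator does not vanish at `c`. -/
def NoPoleAt (f : RatFunc ℂ) (c : ℂ) : Prop := f.denom.eval c ≠ 0

/-- `(q1, p1, q2, p2)` is a rational solution of the Sasano system
`A5^(2)(α0, α1, α2, α3)` (the parameter `α2` does not occur in the equations):
the four differential equations hold at every point `t ∈ ℂ` which is not a pole
of any of `q1, p1, q2, p2`. -/
def IsSasanoSol (a0 a1 a3 : ℂ) (q1 p1 q2 p2 : RatFunc ℂ) : Prop :=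
  ∀ t : ℂ, NoPoleAt q1 t → NoPoleAt p1 t → NoPoleAt q2 t → NoPoleAt p2 t →
    (t * deriv (evR q1) t =
      2 * (evR q1 t) ^ 2 * evR p1 t - (evR q1 t) ^ 2 + (a0 + a1 + a3) * evR q1 t
        - t + 4 * t * evR p2 t + 2 * evR q1 t * evR q2 t * evR p2 t) ∧
    (t * deriv (evR p1) t =
      -2 * evR q1 t * (evR p1 t) ^ 2 + 2 * evR q1 t * evR p1 t
        - (a0 + a1 + a3) * evR p1 t + a0 - 2 * evR p1 t * evR q2 t * evR p2 t) ∧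
    (t * deriv (evR q2) t =
      2 * (evR q2 t) ^ 2 * evR p2 t - (evR q2 t) ^ 2 + (a0 + a1 + a3) * evR q2 t
        - t + 4 * t * evR p1 t + 2 * evR q1 t * evR p1 t * evR q2 t) ∧
    (t * deriv (evR p2) t =
      -2 * evR q2 t * (evR p2 t) ^ 2 + 2 * evR q2 t * evR p2 t
        - (a0 + a1 + a3) * evR p2 t + a1 - 2 * evR q1 t * evR p1 t * evR p2 t)

/-! Order at infinity of rational functions. -/

/-- `OO n x`: the rational function `x` is `O(t^n)` at infinity. -/
def OO (n : ℤ) (x : RatFunc ℂ) : Prop := x = 0 ∨ x.intDegree ≤ n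

lemma OO.mono {n m : ℤ} {x : RatFunc ℂ} (h : OO n x) (hnm : n ≤ m) : OO m x := by
  rcases h with h | h
  · exact Or.inl h
  · exact Or.inr (h.trans hnm)

lemma OO.add {n : ℤ} {x y : RatFunc ℂ} (hx : OO n x) (hy : OO n y) : OO n (x + y) := by
  by_cases hxy : x + y = 0
  · exact Or.inl hxy
  rcases hx with rfl | hx
  · simpa using hy
  rcases hy with rfl | hy
  · right; simpa using hx
  by_cases hy0 : y = 0
  · subst hy0; right; simpa using hx
  right
  exact (RatFunc.intDegree_add_le hy0 hxy).trans (max_le hx hy)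

lemma OO.neg {n : ℤ} {x : RatFunc ℂ} (hx : OO n x) : OO n (-x) := by
  rcases hx with rfl | hx
  · left; simp
  · right; simpa using hx

lemma OO.sub {n : ℤ} {x y : RatFunc ℂ} (hx : OO n x) (hy : OO n y) : OO n (x - y) := by
  rw [sub_eq_add_neg]; exact hx.add hy.neg

lemma OO.mul {n m k : ℤ} {x y : RatFunc ℂ} (hx : OO n x) (hy : OO m y) (h : n + m ≤ k) :
    OO k (x * y) := by
  by_cases hx0 : x = 0
  · left; simp [hx0]
  by_cases hy0 : y = 0
  · left; simp [hy0]
  right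
  rw [RatFunc.intDegree_mul hx0 hy0]
  have h1 := hx.resolve_left hx0
  have h2 := hy.resolve_left hy0
  omega

lemma OO.const (c : ℂ) : OO 0 (RatFunc.C c) := by right; simp

lemma OO.ofNat (k : ℕ) : OO 0 (k : RatFunc ℂ) := by
  have := OO.const (k : ℂ)
  simpa using this

lemma OO.nmul (k : ℕ) {n : ℤ} {x : RatFunc ℂ} (hx : OO n x) : OO n ((k : RatFunc ℂ) * x) :=
  (OO.ofNat k).mul hx (by omega)

lemma OO.cmul (c : ℂ) {n : ℤ} {x : RatFunc ℂ} (hx : OO n x) : OO n (RatFunc.C c * x) :=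
  (OO.const c).mul hx (by omega)

lemma OO.of_nmul (k : ℕ) (hk : k ≠ 0) {n : ℤ} {x : RatFunc ℂ} (hx : OO n ((k : RatFunc ℂ) * x)) :
    OO n x := by
  have h := hx.cmul ((k : ℂ)⁻¹)
  have e : RatFunc.C ((k : ℂ)⁻¹) * ((k : RatFunc ℂ) * x) = x := by
    have : (k : RatFunc ℂ) ≠ 0 := by exact_mod_cast hk
    rw [map_inv₀, map_natCast, ← mul_assoc, inv_mul_cancel₀ this, one_mul]
  rwa [e] at h

lemma OO.X : OO 1 (RatFunc.X : RatFunc ℂ) := by right; simp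

lemma not_OO_X : ¬ OO 0 (RatFunc.X : RatFunc ℂ) := by
  rintro (h | h)
  · exact RatFunc.X_ne_zero h
  · simp at h

lemma exists_deg {n : ℤ} {x : RatFunc ℂ} (h : ¬ OO n x) :
    ∃ m : ℤ, n + 1 ≤ m ∧ OO m x ∧ ¬ OO (m - 1) x := by
  unfold OO at *
  push Not at h
  refine ⟨x.intDegree, by omega, Or.inr le_rfl, ?_⟩
  push Not
  exact ⟨h.1, by omega⟩

lemma OO.cancel {n m : ℤ} {x y : RatFunc ℂ} (h : OO n (x * y)) (hx : ¬ OO (m - 1) x) :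
    OO (n - m) y := by
  unfold OO at hx
  push Not at hx
  by_cases hy : y = 0
  · exact Or.inl hy
  right
  have := h.resolve_left (mul_ne_zero hx.1 hy)
  rw [RatFunc.intDegree_mul hx.1 hy] at this
  omega

lemma OO.cancel_X {n : ℤ} {y : RatFunc ℂ} (h : OO n (RatFunc.X * y)) : OO (n - 1) y :=
  h.cancel (m := 1) (by simpa using not_OO_X)

lemma OO.eq_zero {x : RatFunc ℂ} (h : ∀ n : ℕ, OO (-(n : ℤ)) x) : x = 0 := by
  by_contra hx
  have := (h (x.intDegree.natAbs + 1)).resolve_left hx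
  have h2 := neg_abs_le x.intDegree
  push_cast at this
  omega

lemma OO.poly {p : ℂ[X]} {n : ℕ} (h : p.natDegree ≤ n) :
    OO n (algebraMap ℂ[X] (RatFunc ℂ) p) := by
  right; simpa using h

lemma natDegree_X_deriv (p : ℂ[X]) :
    (Polynomial.X * Polynomial.derivative p).natDegree ≤ p.natDegree := by
  by_cases h : p.natDegree = 0
  · rw [Polynomial.derivative_of_natDegree_zero h]; simp
  · have := Polynomial.natDegree_derivative_lt h
    have h2 := Polynomial.natDegree_mul_le (p := Polynomial.X) (q := Polynomial.derivative p)
    rw [Polynomial.natDegree_X] at h2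
    omega

/-- The Euler operator `t d/dt` of `n / d`. -/
noncomputable def eulerQ (n d : ℂ[X]) : RatFunc ℂ :=
  algebraMap ℂ[X] (RatFunc ℂ)
    (Polynomial.X * Polynomial.derivative n * d - n * (Polynomial.X * Polynomial.derivative d)) /
  algebraMap ℂ[X] (RatFunc ℂ) (d ^ 2)

lemma eulerQ_OO {n d : ℂ[X]} (hd : d ≠ 0) {k : ℤ}
    (h : OO k (algebraMap ℂ[X] (RatFunc ℂ) n / algebraMap ℂ[X] (RatFunc ℂ) d)) :
    OO k (eulerQ n d) := by
  have inj := RatFunc.algebraMap_injective ℂ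
  have hd' : algebraMap ℂ[X] (RatFunc ℂ) d ≠ 0 := by
    simpa using hd
  by_cases hn : n = 0
  · left; simp [eulerQ, hn]
  have hn' : algebraMap ℂ[X] (RatFunc ℂ) n ≠ 0 := by
    simpa using hn
  have h1 := h.resolve_left (div_ne_zero hn' hd')
  rw [RatFunc.intDegree_div hn' hd', RatFunc.intDegree_polynomial,
    RatFunc.intDegree_polynomial] at h1
  have h2 : OO (n.natDegree + d.natDegree : ℕ) (algebraMap ℂ[X] (RatFunc ℂ)
    (Polynomial.X * Polynomial.derivative n * d
      - n * (Polynomial.X * Polynomial.derivative d))) := by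
    apply OO.poly
    refine (Polynomial.natDegree_sub_le _ _).trans (max_le ?_ ?_)
    · exact Polynomial.natDegree_mul_le.trans (Nat.add_le_add_right (natDegree_X_deriv n) _)
    · exact Polynomial.natDegree_mul_le.trans (Nat.add_le_add_left (natDegree_X_deriv d) _)
  have h3 : OO (-2 * d.natDegree : ℤ) (algebraMap ℂ[X] (RatFunc ℂ) (d ^ 2))⁻¹ := by
    right
    rw [RatFunc.intDegree_inv, RatFunc.intDegree_polynomial, Polynomial.natDegree_pow]
    push_cast; omega
  unfold eulerQ
  rw [div_eq_mul_inv]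
  exact h2.mul h3 (by push_cast; omega)

/-- The Euler operator `t d/dt`. -/
noncomputable def euler (f : RatFunc ℂ) : RatFunc ℂ := eulerQ f.num f.denom

lemma OO.euler_sub {f : RatFunc ℂ} {k : ℤ} (c : ℂ) (h : OO k (f - RatFunc.C c)) :
    OO k (euler f) := by
  have e : euler f = eulerQ (f.num - Polynomial.C c * f.denom) f.denom := by
    have e' : Polynomial.X * Polynomial.derivative f.num * f.denom
        - f.num * (Polynomial.X * Polynomial.derivative f.denom)
      = Polynomial.X * Polynomial.derivative (f.num - Polynomial.C c * f.denom) * f.denom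
        - (f.num - Polynomial.C c * f.denom) * (Polynomial.X * Polynomial.derivative f.denom) := by
      simp only [Polynomial.derivative_sub, Polynomial.derivative_mul, Polynomial.derivative_C]
      ring
    unfold euler eulerQ
    rw [e']
  rw [e]
  apply eulerQ_OO f.denom_ne_zero
  have hd' : algebraMap ℂ[X] (RatFunc ℂ) f.denom ≠ 0 := by
    simpa using f.denom_ne_zero
  rw [map_sub, map_mul, sub_div, RatFunc.num_div_denom, mul_div_cancel_right₀ _ hd']
  simpa using h

lemma OO.euler {f : RatFunc ℂ} {k : ℤ} (h : OO k f) : OO k (euler f) :=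
  OO.euler_sub 0 (by simpa using h)

/-! From pointwise identities to identities of rational functions. -/

lemma ev_denom (f : RatFunc ℂ) : ∀ᶠ t in cofinite, f.denom.eval t ≠ 0 := by
  have := Polynomial.finite_setOfPred_isRoot f.denom_ne_zero
  rw [Filter.eventually_cofinite]
  simpa [Polynomial.IsRoot] using this

lemma evR_eq (f : RatFunc ℂ) (t : ℂ) : evR f t = f.eval (RingHom.id ℂ) t := by
  simp [evR, RatFunc.eval, Polynomial.eval₂_id]

lemma ev_add (f g : RatFunc ℂ) : ∀ᶠ t in cofinite, evR (f + g) t = evR f t + evR g t := by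
  filter_upwards [ev_denom f, ev_denom g] with t hf hg
  simp only [evR_eq]
  exact RatFunc.eval_add (RingHom.id ℂ) t hf hg

lemma ev_mul (f g : RatFunc ℂ) : ∀ᶠ t in cofinite, evR (f * g) t = evR f t * evR g t := by
  filter_upwards [ev_denom f, ev_denom g] with t hf hg
  simp only [evR_eq]
  exact RatFunc.eval_mul (RingHom.id ℂ) t hf hg

lemma ev_C (c : ℂ) (t : ℂ) : evR (RatFunc.C c) t = c := by simp [evR]

lemma ev_X (t : ℂ) : evR RatFunc.X t = t := by simp [evR]

lemma ev_ext {f g : RatFunc ℂ} (h : ∀ᶠ t in cofinite, evR f t = evR g t) : f = g := by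
  have key : f.num * g.denom = g.num * f.denom := by
    have h' : ∀ᶠ t in cofinite, (f.num * g.denom).eval t = (g.num * f.denom).eval t := by
      filter_upwards [h, ev_denom f, ev_denom g] with t ht hf hg
      unfold evR at ht
      rw [div_eq_div_iff hf hg] at ht
      simpa using ht
    exact Polynomial.eq_of_infinite_eval_eq _ _ (Filter.frequently_cofinite_iff_infinite.mp h'.frequently)
  rw [← RatFunc.num_div_denom f, ← RatFunc.num_div_denom g]
  have hf : algebraMap ℂ[X] (RatFunc ℂ) f.denom ≠ 0 := by simpa using f.denom_ne_zero
  have hg : algebraMap ℂ[X] (RatFunc ℂ) g.denom ≠ 0 := by simpa using g.denom_ne_zero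
  rw [div_eq_div_iff hf hg, ← map_mul, ← map_mul, key]

lemma ev_euler (f : RatFunc ℂ) : ∀ᶠ t in cofinite, evR (euler f) t = t * deriv (evR f) t := by
  set N := Polynomial.X * Polynomial.derivative f.num * f.denom
      - f.num * (Polynomial.X * Polynomial.derivative f.denom) with hN
  have hd' : algebraMap ℂ[X] (RatFunc ℂ) (f.denom ^ 2) ≠ 0 := by
    simpa using f.denom_ne_zero
  have e : euler f * algebraMap ℂ[X] (RatFunc ℂ) (f.denom ^ 2) = algebraMap ℂ[X] (RatFunc ℂ) N := by
    unfold euler eulerQ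
    rw [div_mul_cancel₀ _ hd']
  have evp : ∀ (p : ℂ[X]) (t : ℂ), evR (algebraMap ℂ[X] (RatFunc ℂ) p) t = p.eval t := by
    intro p t; simp [evR]
  filter_upwards [ev_denom f, ev_mul (euler f) (algebraMap ℂ[X] (RatFunc ℂ) (f.denom ^ 2))]
    with t ht h1
  rw [e, evp, evp] at h1
  have hder : HasDerivAt (evR f) _ t := (f.num.hasDerivAt t).div (f.denom.hasDerivAt t) ht
  rw [hder.deriv]
  simp only [hN, Polynomial.eval_sub, Polynomial.eval_mul, Polynomial.eval_X,
    Polynomial.eval_pow] at h1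
  field_simp
  linear_combination -h1

/-! The core argument. -/

/-- One half of the system (for the pair `q, p` and the momentum of its partner). -/
structure HalfSys (a : ℂ) (f q p p' : RatFunc ℂ) : Prop where
  eq : euler q = q * (f - q) + RatFunc.X * (4 * p' - 1)
  ep : euler p = p * (2 * q - f) + RatFunc.C (a / 2)

lemma HalfSys.f_sub {a : ℂ} {f q p p' : RatFunc ℂ} (h : HalfSys a f q p p') (hp : ¬ OO (-1) p) :
    OO 0 (f - 2 * q) := by
  obtain ⟨n, hn, h1, h2⟩ := exists_deg hp
  have h3 : OO n (p * (f - 2 * q)) := by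
    have : p * (f - 2 * q) = RatFunc.C (a / 2) - euler p := by rw [h.ep]; ring
    rw [this]
    exact ((OO.const _).mono (by omega)).sub h1.euler
  simpa using h3.cancel h2

/-- Parity obstruction. -/
lemma parity {q g r : RatFunc ℂ} (hg : OO 0 g) (hr : OO (-1) r)
    (h : q * q = q * g + euler q + RatFunc.X * (4 * r) + RatFunc.X ∨
         q * q = q * g - euler q + RatFunc.X * (4 * r) - RatFunc.X ∨
         q * q = euler q - q * g - RatFunc.X * (4 * r) + RatFunc.X) : False := by
  have hXr : OO 0 (RatFunc.X * (4 * r)) := OO.X.mul (OO.nmul 4 hr) (by omega)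
  by_cases hq : OO 0 q
  · apply not_OO_X
    have h1 : OO 0 (q * q) := hq.mul hq (by omega)
    have h2 : OO 0 (q * g) := hq.mul hg (by omega)
    have h3 := hq.euler
    rcases h with h | h | h
    · have : RatFunc.X = q * q - q * g - euler q - RatFunc.X * (4 * r) := by rw [h]; ring
      rw [this]
      exact ((h1.sub h2).sub h3).sub hXr
    · have : RatFunc.X = q * g - q * q - euler q + RatFunc.X * (4 * r) := by rw [h]; ring
      rw [this]
      exact ((h2.sub h1).sub h3).add hXr
    · have : RatFunc.X = q * q + q * g - euler q + RatFunc.X * (4 * r) := by rw [h]; ring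
      rw [this]
      exact ((h1.add h2).sub h3).add hXr
  · obtain ⟨m, hm, h1, h2⟩ := exists_deg hq
    have a1 : OO m (q * g) := h1.mul hg (by omega)
    have a2 := h1.euler
    have a3 : OO m (RatFunc.X * (4 * r)) := hXr.mono (by omega)
    have a4 : OO m (RatFunc.X : RatFunc ℂ) := OO.X.mono (by omega)
    have : OO m (q * q) := by
      rcases h with h | h | h
      · rw [h]; exact ((a1.add a2).add a3).add a4
      · rw [h]; exact ((a1.sub a2).add a3).sub a4
      · rw [h]; exact ((a2.sub a1).sub a3).add a4
    exact h2 ((this.cancel h2).mono (by omega))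

lemma HalfSys.no_mixed {a : ℂ} {f q p p' : RatFunc ℂ} (h : HalfSys a f q p p')
    (hp : ¬ OO (-1) p) (hp' : OO (-1) p') : False := by
  apply parity (q := q) (h.f_sub hp) hp'
  right; right
  rw [h.eq]; ring

lemma HalfSys.small {a : ℂ} {f q p p' : RatFunc ℂ} (h : HalfSys a f q p p')
    (hp : OO (-1) p) (hp' : OO (-1) p') {k : ℤ} (hk : 1 ≤ k) (hf : OO k f)
    (hf' : ¬ OO (k - 1) f) : OO 0 (q * p) := by
  have hXp : OO 0 (RatFunc.X * (4 * p')) := OO.X.mul (OO.nmul 4 hp') (by omega)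
  have e1 : q * (f - q) = euler q - RatFunc.X * (4 * p') + RatFunc.X := by rw [h.eq]; ring
  have b1 : ∀ m, 1 ≤ m → OO m q → OO m (q * (f - q)) := by
    intro m hm hq
    rw [e1]
    exact (hq.euler.sub (hXp.mono (by omega))).add (OO.X.mono (by omega))
  have hq : OO k q := by
    by_contra hq
    obtain ⟨m, hm, h1, h2⟩ := exists_deg hq
    have h3 : OO 0 (f - q) := by
      simpa using (b1 m (by omega) h1).cancel h2
    apply h2
    have : q = f - (f - q) := by ring
    rw [this]
    exact (hf.mono (by omega)).sub (h3.mono (by omega))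
  have hd : ¬ OO (k - 1) (2 * q - f) := by
    intro hc
    by_cases hq' : OO (k - 1) q
    · apply hf'
      have : f = 2 * q - (2 * q - f) := by ring
      rw [this]
      exact (OO.nmul 2 hq').sub hc
    · have h3 : OO 0 (f - q) := by
        simpa using (b1 k hk hq).cancel hq'
      apply hq'
      have : q = (2 * q - f) + (f - q) := by ring
      rw [this]
      exact hc.add (h3.mono (by omega))
  have hp2 : OO 0 ((2 * q - f) * p) := by
    have : (2 * q - f) * p = euler p - RatFunc.C (a / 2) := by rw [h.ep]; ring
    rw [this]
    exact (hp.euler.mono (by omega)).sub (OO.const _)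
  exact hq.mul (hp2.cancel hd) (by omega)

lemma core_infty {a : ℂ} {q1 p1 q2 p2 f : RatFunc ℂ}
    (hf : f = 2 * (q1 * p1 + q2 * p2) + RatFunc.C (2 * a))
    (H1 : HalfSys a f q1 p1 p2) (H2 : HalfSys a f q2 p2 p1) :
    OO 0 q1 ∧ OO 0 q2 ∧ OO 0 f := by
  by_cases hp1 : OO (-1) p1
  · by_cases hp2 : OO (-1) p2
    · exfalso
      by_cases hf0 : OO 0 f
      · apply parity (q := q1) hf0 hp2
        right; left
        rw [H1.eq]; ring
      · obtain ⟨k, hk, h1, h2⟩ := exists_deg hf0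
        apply hf0
        rw [hf]
        exact (OO.nmul 2 ((H1.small hp1 hp2 (by omega) h1 h2).add
          (H2.small hp2 hp1 (by omega) h1 h2))).add (OO.const _)
    · exact (H2.no_mixed hp2 hp1).elim
  · by_cases hp2 : OO (-1) p2
    · exact (H1.no_mixed hp1 hp2).elim
    · have f1 := H1.f_sub hp1
      have f2 := H2.f_sub hp2
      have hd : OO 0 (q2 - q1) := by
        apply OO.of_nmul 2 (by norm_num)
        have : ((2 : ℕ) : RatFunc ℂ) * (q2 - q1) = (f - 2 * q1) - (f - 2 * q2) := by
          push_cast; ring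
        rw [this]; exact f1.sub f2
      by_cases hq : OO 0 q1
      · refine ⟨hq, ?_, ?_⟩
        · have : q2 = q1 + (q2 - q1) := by ring
          rw [this]; exact hq.add hd
        · have : f = (f - 2 * q1) + 2 * q1 := by ring
          rw [this]; exact f1.add (OO.nmul 2 hq)
      · exfalso
        obtain ⟨m, hm, h1, h2⟩ := exists_deg hq
        have hq2 : OO m q2 := by
          have : q2 = q1 + (q2 - q1) := by ring
          rw [this]; exact h1.add (hd.mono (by omega))
        have hX : OO m (RatFunc.X : RatFunc ℂ) := OO.X.mono (by omega)
        have c2 : OO m (4 * (RatFunc.X * p2) + q1 * q1) := by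
          have : 4 * (RatFunc.X * p2) + q1 * q1
            = euler q1 - q1 * (f - 2 * q1) + RatFunc.X := by rw [H1.eq]; ring
          rw [this]
          exact (h1.euler.sub (h1.mul f1 (by omega))).add hX
        have c1 : OO m (4 * (RatFunc.X * p1) + q1 * q1) := by
          have : 4 * (RatFunc.X * p1) + q1 * q1
            = euler q2 - q2 * (f - 2 * q2) + RatFunc.X - (q2 - q1) * (q2 + q1) := by
            rw [H2.eq]; ring
          rw [this]
          exact ((hq2.euler.sub (hq2.mul f2 (by omega))).add hX).sub
            (hd.mul (hq2.add h1) (by omega))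
        have c2' : OO (2 * m) (4 * (RatFunc.X * p2)) := by
          have : 4 * (RatFunc.X * p2) = (4 * (RatFunc.X * p2) + q1 * q1) - q1 * q1 := by ring
          rw [this]
          exact (c2.mono (by omega)).sub (h1.mul h1 (by omega))
        have c3 : OO (2 * m) (q1 * (q1 * q1)) := by
          apply OO.of_nmul 2 (by norm_num)
          have : ((2 : ℕ) : RatFunc ℂ) * (q1 * (q1 * q1)) =
              q1 * (4 * (RatFunc.X * p1) + q1 * q1) + q1 * (4 * (RatFunc.X * p2) + q1 * q1)
              + (q2 - q1) * (4 * (RatFunc.X * p2))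
              - ((2 : ℕ) : RatFunc ℂ) * (RatFunc.X * (f - 2 * q1))
              - ((4 : ℕ) : RatFunc ℂ) * (RatFunc.X * q1)
              + RatFunc.X * (((2 : ℕ) : RatFunc ℂ) * RatFunc.C (2 * a)) := by
            push_cast; rw [hf]; ring
          rw [this]
          refine ((((OO.add ?_ ?_).add ?_).sub ?_).sub ?_).add ?_
          · exact h1.mul c1 (by omega)
          · exact h1.mul c2 (by omega)
          · exact hd.mul c2' (by omega)
          · exact OO.nmul 2 (OO.X.mul f1 (by omega))
          · exact OO.nmul 4 (OO.X.mul h1 (by omega))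
          · exact OO.X.mul (OO.nmul 2 (OO.const _)) (by omega)
        have c4 := (c3.cancel h2).cancel h2
        exact h2 (c4.mono (by omega))

/-- One descent step, for one half of the system. -/
lemma HalfSys.delta {a : ℂ} {f q p p' : RatFunc ℂ} (h : HalfSys a f q p p') (hf : OO 0 f)
    (hq0 : OO 0 q) {n : ℤ} (hq : OO n q) : OO (n - 1) (p' - RatFunc.C (1 / 4)) := by
  apply OO.of_nmul 4 (by norm_num)
  apply OO.cancel_X
  have e4 : ((4 : ℕ) : RatFunc ℂ) * RatFunc.C (1 / 4) = 1 := by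
    rw [← map_natCast (RatFunc.C : ℂ →+* RatFunc ℂ), ← map_mul]; simp
  have : RatFunc.X * (((4 : ℕ) : RatFunc ℂ) * (p' - RatFunc.C (1 / 4)))
      = euler q - q * (f - q) := by
    rw [mul_sub, e4, h.eq]; push_cast; ring
  rw [this]
  exact hq.euler.sub (hq.mul (hf.sub hq0) (by omega))

lemma HalfSys.lin {a : ℂ} {f q p p' q' : RatFunc ℂ} (h : HalfSys a f q p p')
    (hf : f = 2 * (q * p + q' * p') + RatFunc.C (2 * a)) (hf0 : OO 0 f)
    (hq0 : OO 0 q) (hq0' : OO 0 q') {n : ℤ}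
    (hp : OO (n - 1) (p - RatFunc.C (1 / 4)))
    (hp' : OO (n - 1) (p' - RatFunc.C (1 / 4))) : OO (n - 1) (3 * q - q') := by
  obtain ⟨d, hd⟩ : ∃ d, d = p - RatFunc.C (1 / 4) := ⟨_, rfl⟩
  obtain ⟨d', hd'⟩ : ∃ d', d' = p' - RatFunc.C (1 / 4) := ⟨_, rfl⟩
  have he := hp.euler_sub
  rw [← hd] at hp
  rw [← hd'] at hp'
  obtain ⟨c, hc⟩ : ∃ c : RatFunc ℂ, c = RatFunc.C (1 / 4) := ⟨_, rfl⟩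
  have e4 : 4 * c = 1 := by
    rw [hc, ← map_ofNat (RatFunc.C : ℂ →+* RatFunc ℂ) 4, ← map_mul]; simp
  obtain ⟨A, hA⟩ : ∃ A : RatFunc ℂ, A = RatFunc.C (a / 2) := ⟨_, rfl⟩
  have eA : RatFunc.C (2 * a) = 4 * A := by
    rw [hA, ← map_ofNat (RatFunc.C : ℂ →+* RatFunc ℂ) 4, ← map_mul]; congr 1; ring
  have h2 := h.ep
  rw [← hA] at h2
  rw [eA] at hf
  rw [← hc] at hd hd'
  have ep : p = d + c := by rw [hd]; ring
  have ep' : p' = d' + c := by rw [hd']; ring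
  have key : 3 * q - q' = ((8 : ℕ) : RatFunc ℂ) * (euler p) + ((8 : ℕ) : RatFunc ℂ) * (d * f)
      - ((16 : ℕ) : RatFunc ℂ) * (q * d) + ((4 : ℕ) : RatFunc ℂ) * (q * d + q' * d') := by
    push_cast
    have hcc : 8 * c * f = 2 * f := by linear_combination 2 * f * e4
    rw [h2]
    have : 2 * f = 4 * (q * d + q' * d') + (q + q') + 8 * A := by
      rw [hf, ep, ep']; linear_combination (q + q') * e4
    rw [ep]
    linear_combination this + hcc - 4 * q * e4
  rw [key]
  refine (((OO.nmul 8 he).add (OO.nmul 8 ?_)).sub (OO.nmul 16 ?_)).add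
    (OO.nmul 4 (OO.add ?_ ?_))
  · exact hp.mul hf0 (by omega)
  · exact hq0.mul hp (by omega)
  · exact hq0.mul hp (by omega)
  · exact hq0'.mul hp' (by omega)

lemma core {a : ℂ} {q1 p1 q2 p2 f : RatFunc ℂ}
    (hf : f = 2 * (q1 * p1 + q2 * p2) + RatFunc.C (2 * a))
    (H1 : HalfSys a f q1 p1 p2) (H2 : HalfSys a f q2 p2 p1) :
    q1 = 0 ∧ p1 = RatFunc.C (1 / 4) ∧ q2 = 0 ∧ p2 = RatFunc.C (1 / 4) := by
  obtain ⟨hq1, hq2, hf0⟩ := core_infty hf H1 H2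
  have step : ∀ n : ℕ, OO (-(n : ℤ)) q1 ∧ OO (-(n : ℤ)) q2 := by
    intro n
    induction n with
    | zero => simpa using ⟨hq1, hq2⟩
    | succ n ih =>
      obtain ⟨i1, i2⟩ := ih
      have d2 := H1.delta hf0 hq1 i1
      have d1 := H2.delta hf0 hq2 i2
      have l1 := H1.lin hf hf0 hq1 hq2 d1 d2
      have l2 := H2.lin (by rw [hf]; ring) hf0 hq2 hq1 d2 d1
      have en : (-((n + 1 : ℕ) : ℤ)) = -(n : ℤ) - 1 := by push_cast; ring
      rw [en]
      constructor
      · apply OO.of_nmul 8 (by norm_num)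
        have : ((8 : ℕ) : RatFunc ℂ) * q1 = ((3 : ℕ) : RatFunc ℂ) * (3 * q1 - q2)
          + (3 * q2 - q1) := by push_cast; ring
        rw [this]; exact (OO.nmul 3 l1).add l2
      · apply OO.of_nmul 8 (by norm_num)
        have : ((8 : ℕ) : RatFunc ℂ) * q2 = ((3 : ℕ) : RatFunc ℂ) * (3 * q2 - q1)
          + (3 * q1 - q2) := by push_cast; ring
        rw [this]; exact (OO.nmul 3 l2).add l1
  have z1 : q1 = 0 := OO.eq_zero fun n => (step n).1
  have z2 : q2 = 0 := OO.eq_zero fun n => (step n).2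
  have e2 : p2 - RatFunc.C (1 / 4) = 0 := OO.eq_zero fun n =>
    (H1.delta hf0 hq1 (step n).1).mono (by omega)
  have e1 : p1 - RatFunc.C (1 / 4) = 0 := OO.eq_zero fun n =>
    (H2.delta hf0 hq2 (step n).2).mono (by omega)
  exact ⟨z1, sub_eq_zero.mp e1, z2, sub_eq_zero.mp e2⟩

/-- Evaluation data: `F` represents the function `φ` away from finitely many points. -/
def RepFn (F : RatFunc ℂ) (φ : ℂ → ℂ) : Prop := ∀ᶠ t in cofinite, evR F t = φ t

lemma RepFn.add {F G : RatFunc ℂ} {φ ψ : ℂ → ℂ} (h : RepFn F φ) (k : RepFn G ψ) :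
    RepFn (F + G) (fun t => φ t + ψ t) := by
  filter_upwards [h, k, ev_add F G] with t h1 h2 h3
  rw [h3, h1, h2]

lemma RepFn.mul {F G : RatFunc ℂ} {φ ψ : ℂ → ℂ} (h : RepFn F φ) (k : RepFn G ψ) :
    RepFn (F * G) (fun t => φ t * ψ t) := by
  filter_upwards [h, k, ev_mul F G] with t h1 h2 h3
  rw [h3, h1, h2]

lemma RepFn.const (c : ℂ) : RepFn (RatFunc.C c) (fun _ => c) := Eventually.of_forall (ev_C c)

lemma RepFn.X : RepFn RatFunc.X (fun t => t) := Eventually.of_forall ev_X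

lemma RepFn.self (F : RatFunc ℂ) : RepFn F (evR F) := Eventually.of_forall fun _ => rfl

lemma half_of {a : ℂ} {q1 p1 q2 p2 : RatFunc ℂ}
    (h : ∀ᶠ t in cofinite, (t * deriv (evR q1) t =
      2 * (evR q1 t) ^ 2 * evR p1 t - (evR q1 t) ^ 2 + (2 * a) * evR q1 t
        - t + 4 * t * evR p2 t + 2 * evR q1 t * evR q2 t * evR p2 t) ∧
    (t * deriv (evR p1) t =
      -2 * evR q1 t * (evR p1 t) ^ 2 + 2 * evR q1 t * evR p1 t
        - (2 * a) * evR p1 t + a / 2 - 2 * evR p1 t * evR q2 t * evR p2 t)) :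
    HalfSys a (2 * (q1 * p1 + q2 * p2) + RatFunc.C (2 * a)) q1 p1 p2 := by
  have R2 : RepFn (2 : RatFunc ℂ) (fun _ => 2) := by
    have := RepFn.const 2
    rwa [map_ofNat] at this
  have R4 : RepFn (4 : RatFunc ℂ) (fun _ => 4) := by
    have := RepFn.const 4
    rwa [map_ofNat] at this
  have Rm : RepFn (-1 : RatFunc ℂ) (fun _ => -1) := by
    have := RepFn.const (-1)
    rwa [map_neg, map_one] at this
  have Q1 := RepFn.self q1
  have Q2 := RepFn.self q2
  have P1 := RepFn.self p1
  have P2 := RepFn.self p2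
  have F := (R2.mul ((Q1.mul P1).add (Q2.mul P2))).add (RepFn.const (2 * a))
  constructor
  · apply ev_ext
    have E := (Q1.mul (F.add (Rm.mul Q1))).add (RepFn.X.mul ((R4.mul P2).add Rm))
    have e : q1 * (2 * (q1 * p1 + q2 * p2) + RatFunc.C (2 * a) - q1)
        + RatFunc.X * (4 * p2 - 1)
      = q1 * (2 * (q1 * p1 + q2 * p2) + RatFunc.C (2 * a) + -1 * q1)
        + RatFunc.X * (4 * p2 + -1) := by ring
    rw [e]
    filter_upwards [E, h, ev_euler q1] with t h1 h2 h3
    rw [h1, h3, h2.1]; ring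
  · apply ev_ext
    have E := (P1.mul ((R2.mul Q1).add (Rm.mul F))).add (RepFn.const (a / 2))
    have e : p1 * (2 * q1 - (2 * (q1 * p1 + q2 * p2) + RatFunc.C (2 * a))) + RatFunc.C (a / 2)
      = p1 * (2 * q1 + -1 * (2 * (q1 * p1 + q2 * p2) + RatFunc.C (2 * a)))
        + RatFunc.C (a / 2) := by ring
    rw [e]
    filter_upwards [E, h, ev_euler p1] with t h1 h2 h3
    rw [h1, h3, h2.2]; ring

theorem sasano_standard_rational_solution (a0 a1 a2 a3 : ℂ)
    (h0 : a0 = a3 / 2) (h1 : a1 = a3 / 2) (h2 : a2 = 1 / 4 - a3) :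
    IsSasanoSol a0 a1 a3 0 (RatFunc.C (1 / 4)) 0 (RatFunc.C (1 / 4)) ∧
    ∀ q1 p1 q2 p2 : RatFunc ℂ, IsSasanoSol a0 a1 a3 q1 p1 q2 p2 →
      q1 = 0 ∧ p1 = RatFunc.C (1 / 4) ∧ q2 = 0 ∧ p2 = RatFunc.C (1 / 4) := by
  constructor
  · intro t _ _ _ _
    have z : evR 0 = fun _ => 0 := by funext t; simp [evR]
    have c : evR (RatFunc.C (1 / 4)) = fun _ => 1 / 4 := by funext t; exact ev_C _ t
    rw [z, c]
    simp only [deriv_const]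
    subst h0 h1
    refine ⟨?_, ?_, ?_, ?_⟩ <;> ring
  · intro q1 p1 q2 p2 h
    subst h0 h1
    have H1 : HalfSys a3 _ q1 p1 p2 := half_of (q2 := q2) (by
      filter_upwards [ev_denom q1, ev_denom p1, ev_denom q2, ev_denom p2] with t a b c d
      obtain ⟨e1, e2, e3, e4⟩ := h t a b c d
      exact ⟨by rw [e1]; ring, by rw [e2]; ring⟩)
    have H2 : HalfSys a3 _ q2 p2 p1 := half_of (q2 := q1) (by
      filter_upwards [ev_denom q1, ev_denom p1, ev_denom q2, ev_denom p2] with t a b c d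
      obtain ⟨e1, e2, e3, e4⟩ := h t a b c d
      exact ⟨by rw [e3]; ring, by rw [e4]; ring⟩)
    rw [add_comm (q2 * p2)] at H2
    exact core rfl H1 H2
end

section
/- Let (q1,p1,q2,p2) be a rational solution of A5^(2)(α0,α1,α2,α3). Then, along the cocompact filter on ℂ (i.e., as |t| → ∞): q1(t) → −2α0+α3, p1(t) → 1/4, q2(t) → −2α1+α3, p2(t) → 1/4, and moreover t·(p1(t) − 1/4) → (−2α1+α3)·(−2α1−α3)/4 and t·(p2(t) − 1/4) → (−2α0+α3)·(−2α0−α3)/4. -/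
open Filter Topology Polynomial

open Asymptotics

lemma poly_isBigO {P Q : ℂ[X]} (h : P.degree ≤ Q.degree) :
    (fun t => P.eval t) =O[cocompact ℂ] (fun t => Q.eval t) := by
  rw [← Metric.cobounded_eq_cocompact]
  exact Polynomial.isBigO_cobounded_of_degree_le h

lemma poly_ev_ne {P : ℂ[X]} (h : P ≠ 0) : ∀ᶠ t in cocompact ℂ, P.eval t ≠ 0 := by
  have hfin : {t | P.eval t = 0}.Finite := by
    refine (P.roots.toFinset.finite_toSet).subset ?_
    intro t ht
    simp only [Finset.mem_coe, Multiset.mem_toFinset, Polynomial.mem_roots h]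
    exact ht
  exact Filter.cocompact_le_cofinite hfin.compl_mem_cofinite

/-- Dichotomy for rational functions. -/
lemma evR_dichotomy (f g : RatFunc ℂ) :
    (evR f) =O[cocompact ℂ] (evR g) ∨
      (fun t => t * evR g t) =O[cocompact ℂ] (evR f) := by
  have hf := poly_ev_ne f.denom_ne_zero
  have hg := poly_ev_ne g.denom_ne_zero
  have hinv : (fun t => (f.denom.eval t * g.denom.eval t)⁻¹) =O[cocompact ℂ]
    (fun t => (f.denom.eval t * g.denom.eval t)⁻¹) := isBigO_refl _ _
  rcases le_or_gt (f.num * g.denom).degree (g.num * f.denom).degree with h | h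
  · left
    refine ((poly_isBigO h).mul hinv).congr' ?_ ?_
    · filter_upwards [hf, hg] with t h1 h2
      simp only [evR, Polynomial.eval_mul]
      field_simp
    · filter_upwards [hf, hg] with t h1 h2
      simp only [evR, Polynomial.eval_mul]
      field_simp
  · right
    have h' : (X * (g.num * f.denom)).degree ≤ (f.num * g.denom).degree := by
      by_cases h0 : g.num * f.denom = 0
      · simp [h0]
      · have h1 : f.num * g.denom ≠ 0 := by
          intro h1; rw [h1] at h; simp at h
        rw [Polynomial.degree_mul, Polynomial.degree_X]
        rw [Polynomial.degree_eq_natDegree h0, Polynomial.degree_eq_natDegree h1] at h ⊢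
        norm_cast at h ⊢
        omega
    refine ((poly_isBigO h').mul hinv).congr' ?_ ?_
    · filter_upwards [hf, hg] with t h1 h2
      simp only [evR, Polynomial.eval_mul, Polynomial.eval_X]
      field_simp
    · filter_upwards [hf, hg] with t h1 h2
      simp only [evR, Polynomial.eval_mul]
      field_simp

lemma poly_deriv_isBigO (P : ℂ[X]) :
    (fun t => t * P.derivative.eval t) =O[cocompact ℂ] (fun t => P.eval t) := by
  have h : (X * P.derivative).degree ≤ P.degree := by
    by_cases h0 : P.derivative = 0
    · simp [h0]
    · have h1 : P ≠ 0 := by rintro rfl; simp at h0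
      have h2 := Polynomial.degree_derivative_lt h1
      rw [Polynomial.degree_mul, Polynomial.degree_X]
      rw [Polynomial.degree_eq_natDegree h0, Polynomial.degree_eq_natDegree h1] at h2 ⊢
      norm_cast at h2 ⊢
      omega
  simpa using poly_isBigO h

lemma evR_deriv_isBigO (f : RatFunc ℂ) (c : ℂ) :
    (fun t => t * deriv (evR f) t) =O[cocompact ℂ] (fun t => evR f t - c) := by
  have hf := poly_ev_ne f.denom_ne_zero
  set M : ℂ[X] := f.num - C c * f.denom with hM
  have hinv : (fun t => (f.denom.eval t * f.denom.eval t)⁻¹) =O[cocompact ℂ]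
    (fun t => (f.denom.eval t * f.denom.eval t)⁻¹) := isBigO_refl _ _
  have h1 := (poly_deriv_isBigO M).mul (isBigO_refl (fun t => f.denom.eval t) (cocompact ℂ))
  have h2 := (isBigO_refl (fun t => M.eval t) (cocompact ℂ)).mul (poly_deriv_isBigO f.denom)
  refine ((h1.sub h2).mul hinv).congr' ?_ ?_
  · filter_upwards [hf] with t ht
    have hd : deriv (evR f) t = (f.num.derivative.eval t * f.denom.eval t
        - f.num.eval t * f.denom.derivative.eval t) / f.denom.eval t ^ 2 :=
      ((f.num.hasDerivAt t).div (f.denom.hasDerivAt t) ht).deriv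
    rw [hd, hM]
    simp only [Polynomial.derivative_sub, Polynomial.derivative_mul, Polynomial.derivative_C,
      Polynomial.eval_sub, Polynomial.eval_mul, Polynomial.eval_C, Polynomial.eval_add,
      Polynomial.eval_zero]
    field_simp
    ring
  · filter_upwards [hf] with t ht
    rw [hM]
    simp only [evR, Polynomial.eval_sub, Polynomial.eval_mul, Polynomial.eval_C]
    field_simp

lemma one_littleO_id : (fun _ : ℂ => (1:ℂ)) =o[cocompact ℂ] (fun t : ℂ => t) := by
  rw [← Metric.cobounded_eq_cocompact]
  exact isLittleO_const_id_cobounded 1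

lemma not_littleO_self {q : ℂ → ℂ} (n : ℕ) (hq : (fun t : ℂ => t) =O[cocompact ℂ] q)
    (h : (fun t => q t ^ n) =o[cocompact ℂ] (fun t => q t ^ n)) : False := by
  have h1 := one_littleO_id.trans_isBigO hq
  refine isLittleO_irrefl (Eventually.frequently ?_) h
  filter_upwards [h1.def one_pos] with t ht
  refine pow_ne_zero _ fun h0 => ?_
  rw [h0] at ht
  norm_num at ht

/-- unbounded case: the remainder is comparable to `q ^ 2`. -/
lemma rem_unbounded {q w r d : ℂ → ℂ} {s c : ℂ}
    (heq : ∀ᶠ t in cocompact ℂ, d t = q t * (2 * w t - q t + s) + r t)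
    (hd : d =O[cocompact ℂ] q) (hq : (fun t : ℂ => t) =O[cocompact ℂ] q)
    (hw : (fun t => w t - c * q t) =o[cocompact ℂ] q) :
    (fun t => r t - (1 - 2 * c) * q t ^ 2) =o[cocompact ℂ] (fun t => q t ^ 2) := by
  have h1 := one_littleO_id.trans_isBigO hq
  have hqq := isBigO_refl q (cocompact ℂ)
  have e1 := h1.mul_isBigO hd
  have e2 := (h1.mul_isBigO hqq).const_mul_left s
  have e3 := (hw.mul_isBigO hqq).const_mul_left 2
  refine ((e1.sub e2).sub e3).congr' ?_ ?_
  · filter_upwards [heq] with t ht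
    rw [ht]; ring
  · exact Eventually.of_forall fun t => by ring


lemma id_not_bounded (h : (fun t : ℂ => t) =O[cocompact ℂ] (fun _ : ℂ => (1:ℂ))) : False := by
  refine isLittleO_irrefl (Eventually.frequently ?_) (one_littleO_id.trans_isBigO h)
  exact Eventually.of_forall fun _ => one_ne_zero

lemma case_small {q w e d : ℂ → ℂ} {s c : ℂ} (hc : 1 - 2 * c ≠ 0)
    (heq : ∀ᶠ t in cocompact ℂ, d t = q t * (2 * w t - q t + s) + (-t + e t))
    (he : e =O[cocompact ℂ] (fun _ : ℂ => (1:ℂ)))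
    (hd : d =O[cocompact ℂ] q)
    (hdich : q =O[cocompact ℂ] (fun _ : ℂ => (1:ℂ)) ∨ (fun t : ℂ => t) =O[cocompact ℂ] q)
    (hb : q =O[cocompact ℂ] (fun _ : ℂ => (1:ℂ)) → w =O[cocompact ℂ] (fun _ : ℂ => (1:ℂ)))
    (hu : (fun t : ℂ => t) =O[cocompact ℂ] q →
      (fun t => w t - c * q t) =o[cocompact ℂ] q) : False := by
  rcases hdich with hq | hq
  · have hw := hb hq
    have hs : (fun _ : ℂ => s) =O[cocompact ℂ] (fun _ : ℂ => (1:ℂ)) :=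
      isBigO_const_const _ one_ne_zero _
    have h1 := hq.mul (((hw.const_mul_left 2).sub hq).add hs)
    simp only [mul_one] at h1
    have h2 := (h1.add he).sub (hd.trans hq)
    refine id_not_bounded (h2.congr' ?_ EventuallyEq.rfl)
    filter_upwards [heq] with t ht
    rw [ht]; ring
  · have h0 := rem_unbounded heq hd hq (hu hq)
    have h1 := one_littleO_id.trans_isBigO hq
    have e1 := h1.mul_isBigO hq
    have e2 := (h1.trans_isBigO ((isBigO_refl q _))).mul_isBigO (he.trans h1.isBigO)
    have e3 : (fun t => (1 - 2 * c) * q t ^ 2) =o[cocompact ℂ] (fun t => q t ^ 2) := by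
      have e1' : (fun t : ℂ => 1 * t) =o[cocompact ℂ] (fun t => q t ^ 2) :=
        e1.congr_right fun t => by ring
      have e2' : (fun t : ℂ => 1 * e t) =o[cocompact ℂ] (fun t => q t ^ 2) :=
        e2.congr_right fun t => by ring
      exact ((e2'.sub e1').sub h0).congr_left fun t => by ring
    exact not_littleO_self 2 hq ((isLittleO_const_mul_left_iff hc).1 e3)

lemma w_sub_q {q p w d : ℂ → ℂ} {s a : ℂ}
    (heq : ∀ᶠ t in cocompact ℂ, d t = p t * (-2 * w t + 2 * q t - s) + a)
    (hd : d =O[cocompact ℂ] p) (hp : (fun _ : ℂ => (1:ℂ)) =O[cocompact ℂ] p) :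
    (fun t => w t - q t) =O[cocompact ℂ] (fun _ : ℂ => (1:ℂ)) := by
  have hne : ∀ᶠ t in cocompact ℂ, p t ≠ 0 := by
    obtain ⟨C, hC⟩ := hp.bound
    filter_upwards [hC] with t ht h0
    rw [h0] at ht
    norm_num at ht
  have h1 := (((hp.const_mul_left a).sub ((isBigO_refl p _).const_mul_left s)).sub hd).const_mul_left
    (1/2)
  refine ((isBigO_refl (fun t => (p t)⁻¹) _).mul h1).congr' ?_ ?_
  · filter_upwards [heq, hne] with t ht hn
    rw [ht]; field_simp; ring
  · filter_upwards [hne] with t hn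
    field_simp

/-- both p of nonnegative degree and unbounded q: impossible. -/
lemma case_unbounded {q1 q2 p1 p2 w d1 d2 : ℂ → ℂ} {s : ℂ}
    (hw : ∀ t, w t = q1 t * p1 t + q2 t * p2 t)
    (h1 : ∀ᶠ t in cocompact ℂ, d1 t = q1 t * (2 * w t - q1 t + s) + t * (4 * p2 t - 1))
    (h2 : ∀ᶠ t in cocompact ℂ, d2 t = q2 t * (2 * w t - q2 t + s) + t * (4 * p1 t - 1))
    (hd1 : d1 =O[cocompact ℂ] q1) (hd2 : d2 =O[cocompact ℂ] q2)
    (hw1 : (fun t => w t - q1 t) =O[cocompact ℂ] (fun _ : ℂ => (1:ℂ)))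
    (hw2 : (fun t => w t - q2 t) =O[cocompact ℂ] (fun _ : ℂ => (1:ℂ)))
    (hq : (fun t : ℂ => t) =O[cocompact ℂ] q1) : False := by
  have ho := one_littleO_id.trans_isBigO hq
  have hq21 : (fun t => q2 t - q1 t) =O[cocompact ℂ] (fun _ : ℂ => (1:ℂ)) :=
    (hw1.sub hw2).congr_left fun t => by ring
  have hq2 : (fun t : ℂ => t) =O[cocompact ℂ] q2 := by
    refine hq.trans ?_
    have : (fun t => q2 t - q1 t) =o[cocompact ℂ] q1 := hq21.trans_isLittleO ho
    exact (IsLittleO.isEquivalent this).isBigO_symm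
  have hq2' : q2 =O[cocompact ℂ] q1 := by
    have := (hq21.trans ho.isBigO).add (isBigO_refl q1 _)
    exact this.congr_left fun t => by ring
  have ho2 := one_littleO_id.trans_isBigO hq2
  have r1 := rem_unbounded (c := 1) h1 hd1 hq
    ((hw1.trans_isLittleO ho).congr_left fun t => by ring)
  have r2 := (rem_unbounded (c := 1) h2 hd2 hq2
    ((hw2.trans_isLittleO ho2).congr_left fun t => by ring)).trans_isBigO (hq2'.pow 2)
  have ht : (fun t : ℂ => t) =o[cocompact ℂ] (fun t => q1 t ^ 2) :=
    (ho.mul_isBigO hq).congr (fun t => by ring) (fun t => by ring)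
  have hqq : (fun t => q2 t ^ 2 - q1 t ^ 2) =o[cocompact ℂ] (fun t => q1 t ^ 2) :=
    ((hq21.trans_isLittleO ho).mul_isBigO (hq2'.add (isBigO_refl q1 _))).congr
      (fun t => by ring) (fun t => by ring)
  have hp2 : (fun t => t * p2 t) =O[cocompact ℂ] (fun t => q1 t ^ 2) :=
    (((r1.add ht).isBigO.sub (isBigO_refl (fun t => q1 t ^ 2) _)).const_mul_left (1/4)).congr_left
      fun t => by ring
  have hsum : (fun t => t * (p1 t + p2 t) + q1 t ^ 2 / 2) =o[cocompact ℂ] (fun t => q1 t ^ 2) :=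
    ((((r1.add r2).sub hqq).add (ht.const_mul_left 2)).const_mul_left (1/4)).congr_left
      fun t => by ring
  have c1 : (fun t => q1 t * (t * (p1 t + p2 t) + q1 t ^ 2 / 2)) =o[cocompact ℂ]
      (fun t => q1 t ^ 3) :=
    ((isBigO_refl q1 _).mul_isLittleO hsum).congr_right fun t => by ring
  have c2 : (fun t => (q2 t - q1 t) * (t * p2 t)) =o[cocompact ℂ] (fun t => q1 t ^ 3) :=
    ((hq21.trans_isLittleO ho).mul_isBigO hp2).congr_right fun t => by ring
  have c3 : (fun t => t * (w t - q1 t)) =o[cocompact ℂ] (fun t => q1 t ^ 3) :=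
    (ht.mul_isBigO (hw1.trans ho.isBigO)).congr_right fun t => by ring
  have c4 : (fun t => t * q1 t) =o[cocompact ℂ] (fun t => q1 t ^ 3) :=
    (ht.mul_isBigO (isBigO_refl q1 _)).congr_right fun t => by ring
  refine not_littleO_self 3 hq ?_
  refine ((((c1.add c2).sub c3).sub c4).const_mul_left 2).congr_left fun t => ?_
  rw [hw]; ring

/-- bounded case gives boundedness of `t (4 p - 1)`. -/
lemma p_close {q p w d : ℂ → ℂ} {s : ℂ}
    (h1 : ∀ᶠ t in cocompact ℂ, d t = q t * (2 * w t - q t + s) + t * (4 * p t - 1))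
    (hd : d =O[cocompact ℂ] q) (hq : q =O[cocompact ℂ] (fun _ : ℂ => (1:ℂ)))
    (hw : w =O[cocompact ℂ] (fun _ : ℂ => (1:ℂ))) :
    (fun t => p t - 1/4) =o[cocompact ℂ] (fun _ : ℂ => (1:ℂ)) := by
  have hs : (fun _ : ℂ => s) =O[cocompact ℂ] (fun _ : ℂ => (1:ℂ)) :=
    isBigO_const_const _ one_ne_zero _
  have h2 := hq.mul (((hw.const_mul_left 2).sub hq).add hs)
  simp only [mul_one] at h2
  have h3 := ((hd.trans hq).sub h2).const_mul_left (1/4)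
  have h4 := h3.trans_isLittleO one_littleO_id
  have hne : ∀ᶠ t : ℂ in cocompact ℂ, t ≠ 0 := by
    simpa using poly_ev_ne (P := X) Polynomial.X_ne_zero
  refine ((isBigO_refl (fun t : ℂ => t⁻¹) _).mul_isLittleO h4).congr' ?_ ?_
  · filter_upwards [h1, hne] with t ht hn
    rw [ht]; field_simp; ring
  · filter_upwards [hne] with t hn
    field_simp

lemma sasano_bounded {q1 q2 p1 p2 w dq1 dq2 dp1 dp2 : ℂ → ℂ} {s a0 a1 : ℂ}
    (hw : ∀ t, w t = q1 t * p1 t + q2 t * p2 t)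
    (hQ1 : ∀ᶠ t in cocompact ℂ, dq1 t = q1 t * (2 * w t - q1 t + s) + t * (4 * p2 t - 1))
    (hQ2 : ∀ᶠ t in cocompact ℂ, dq2 t = q2 t * (2 * w t - q2 t + s) + t * (4 * p1 t - 1))
    (hP1 : ∀ᶠ t in cocompact ℂ, dp1 t = p1 t * (-2 * w t + 2 * q1 t - s) + a0)
    (hP2 : ∀ᶠ t in cocompact ℂ, dp2 t = p2 t * (-2 * w t + 2 * q2 t - s) + a1)
    (hdq1 : ∀ c, dq1 =O[cocompact ℂ] (fun t => q1 t - c))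
    (hdq2 : ∀ c, dq2 =O[cocompact ℂ] (fun t => q2 t - c))
    (hdp1 : ∀ c, dp1 =O[cocompact ℂ] (fun t => p1 t - c))
    (hdp2 : ∀ c, dp2 =O[cocompact ℂ] (fun t => p2 t - c))
    (dq1' : q1 =O[cocompact ℂ] (fun _ : ℂ => (1:ℂ)) ∨ (fun t : ℂ => t) =O[cocompact ℂ] q1)
    (dq2' : q2 =O[cocompact ℂ] (fun _ : ℂ => (1:ℂ)) ∨ (fun t : ℂ => t) =O[cocompact ℂ] q2)
    (dq12 : q1 =O[cocompact ℂ] q2 ∨ q2 =O[cocompact ℂ] q1)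
    (dp1' : (fun _ : ℂ => (1:ℂ)) =O[cocompact ℂ] p1 ∨
      (fun t => t * p1 t) =O[cocompact ℂ] (fun _ : ℂ => (1:ℂ)))
    (dp2' : (fun _ : ℂ => (1:ℂ)) =O[cocompact ℂ] p2 ∨
      (fun t => t * p2 t) =O[cocompact ℂ] (fun _ : ℂ => (1:ℂ))) :
    q1 =O[cocompact ℂ] (fun _ : ℂ => (1:ℂ)) ∧ q2 =O[cocompact ℂ] (fun _ : ℂ => (1:ℂ)) ∧
    w =O[cocompact ℂ] (fun _ : ℂ => (1:ℂ)) := by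
  have z : ∀ f : ℂ → ℂ, (fun t => f t - 0) = f := fun f => by simp
  have eq1 := hdq1 0
  have eq2 := hdq2 0
  have ep1 := hdp1 0
  have ep2 := hdp2 0
  rw [z] at eq1 eq2 ep1 ep2
  have hne : ∀ᶠ t : ℂ in cocompact ℂ, t ≠ 0 := by
    simpa using poly_ev_ne (P := X) Polynomial.X_ne_zero
  have mixed : ∀ {q w p d : ℂ → ℂ}, (∀ᶠ t in cocompact ℂ,
      d t = q t * (2 * w t - q t + s) + t * (4 * p t - 1)) → d =O[cocompact ℂ] q →
      (q =O[cocompact ℂ] (fun _ : ℂ => (1:ℂ)) ∨ (fun t : ℂ => t) =O[cocompact ℂ] q) →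
      (fun t => w t - q t) =O[cocompact ℂ] (fun _ : ℂ => (1:ℂ)) →
      (fun t => t * p t) =O[cocompact ℂ] (fun _ : ℂ => (1:ℂ)) → False := by
    intro q w p d h hd hdi hwq htp
    refine case_small (q := q) (w := w) (e := fun t => 4 * (t * p t)) (d := d) (s := s) (c := 1)
      (by norm_num) ?_ (htp.const_mul_left 4) hd hdi ?_ ?_
    · filter_upwards [h] with t ht
      rw [ht]; ring
    · intro hq
      exact (hwq.add hq).congr_left fun t => by ring
    · intro hq
      exact (hwq.trans_isLittleO (one_littleO_id.trans_isBigO hq)).congr_left fun t => by ring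
  have tiny : ∀ {p : ℂ → ℂ}, (fun t => t * p t) =O[cocompact ℂ] (fun _ : ℂ => (1:ℂ)) →
      p =o[cocompact ℂ] (fun _ : ℂ => (1:ℂ)) := by
    intro p h
    refine ((isBigO_refl (fun t : ℂ => t⁻¹) _).mul_isLittleO
      (h.trans_isLittleO one_littleO_id)).congr' ?_ ?_
    · filter_upwards [hne] with t hn
      field_simp
    · filter_upwards [hne] with t hn
      field_simp
  have small : ∀ {q q' w p p' d : ℂ → ℂ}, (∀ t, w t = q' t * p' t + q t * p t) →
      (∀ᶠ t in cocompact ℂ, d t = q t * (2 * w t - q t + s) + t * (4 * p' t - 1)) →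
      d =O[cocompact ℂ] q →
      (q =O[cocompact ℂ] (fun _ : ℂ => (1:ℂ)) ∨ (fun t : ℂ => t) =O[cocompact ℂ] q) →
      q' =O[cocompact ℂ] q →
      (fun t => t * p t) =O[cocompact ℂ] (fun _ : ℂ => (1:ℂ)) →
      (fun t => t * p' t) =O[cocompact ℂ] (fun _ : ℂ => (1:ℂ)) → False := by
    intro q q' w p p' d hw h hd hdi hqq htp htp'
    have hwq : w =o[cocompact ℂ] q :=
      ((hqq.mul_isLittleO (tiny htp')).add ((isBigO_refl q _).mul_isLittleO (tiny htp))).congr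
        (fun t => (hw t).symm) (fun t => by ring)
    refine case_small (q := q) (w := w) (e := fun t => 4 * (t * p' t)) (d := d) (s := s) (c := 0)
      (by norm_num) ?_ (htp'.const_mul_left 4) hd hdi ?_ ?_
    · filter_upwards [h] with t ht
      rw [ht]; ring
    · intro hq
      exact hwq.isBigO.trans hq
    · intro hq
      exact hwq.congr_left fun t => by ring
  rcases dp1' with hp1 | hp1 <;> rcases dp2' with hp2 | hp2
  · have hw1 := w_sub_q hP1 ep1 hp1
    have hw2 := w_sub_q hP2 ep2 hp2
    rcases dq1' with hq | hq
    · have hwb : w =O[cocompact ℂ] (fun _ : ℂ => (1:ℂ)) :=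
        (hw1.add hq).congr_left fun t => by ring
      exact ⟨hq, (hwb.sub hw2).congr_left fun t => by ring, hwb⟩
    · exact (case_unbounded hw hQ1 hQ2 eq1 eq2 hw1 hw2 hq).elim
  · exact (mixed hQ1 eq1 dq1' (w_sub_q hP1 ep1 hp1) hp2).elim
  · exact (mixed hQ2 eq2 dq2' (w_sub_q hP2 ep2 hp2) hp1).elim
  · rcases dq12 with h | h
    · exact (small hw hQ2 eq2 dq2' h hp2 hp1).elim
    · exact (small (fun t => by rw [hw]; ring) hQ1 eq1 dq1' h hp1 hp2).elim

theorem sasano_limits_at_infinity (a0 a1 a2 a3 : ℂ)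
    (hpar : a0 + a1 + 2 * a2 + a3 = 1 / 2)
    (q1 p1 q2 p2 : RatFunc ℂ)
    (hsol : IsSasanoSol a0 a1 a3 q1 p1 q2 p2) :
    Tendsto (evR q1) (cocompact ℂ) (𝓝 (-2 * a0 + a3)) ∧
    Tendsto (evR p1) (cocompact ℂ) (𝓝 (1 / 4)) ∧
    Tendsto (evR q2) (cocompact ℂ) (𝓝 (-2 * a1 + a3)) ∧
    Tendsto (evR p2) (cocompact ℂ) (𝓝 (1 / 4)) ∧
    Tendsto (fun t : ℂ => t * (evR p1 t - 1 / 4)) (cocompact ℂ)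
      (𝓝 ((-2 * a1 + a3) * (-2 * a1 - a3) / 4)) ∧
    Tendsto (fun t : ℂ => t * (evR p2 t - 1 / 4)) (cocompact ℂ)
      (𝓝 ((-2 * a0 + a3) * (-2 * a0 - a3) / 4)) := by
  set s := a0 + a1 + a3 with hs
  set w : ℂ → ℂ := fun t => evR q1 t * evR p1 t + evR q2 t * evR p2 t with hw
  have hall := ((poly_ev_ne q1.denom_ne_zero).and ((poly_ev_ne p1.denom_ne_zero).and
    ((poly_ev_ne q2.denom_ne_zero).and (poly_ev_ne p2.denom_ne_zero)))).mono
      fun t h => hsol t h.1 h.2.1 h.2.2.1 h.2.2.2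
  have hQ1 : ∀ᶠ t in cocompact ℂ, t * deriv (evR q1) t =
      evR q1 t * (2 * w t - evR q1 t + s) + t * (4 * evR p2 t - 1) := by
    filter_upwards [hall] with t ht
    rw [ht.1]; ring
  have hP1 : ∀ᶠ t in cocompact ℂ, t * deriv (evR p1) t =
      evR p1 t * (-2 * w t + 2 * evR q1 t - s) + a0 := by
    filter_upwards [hall] with t ht
    rw [ht.2.1]; ring
  have hQ2 : ∀ᶠ t in cocompact ℂ, t * deriv (evR q2) t =
      evR q2 t * (2 * w t - evR q2 t + s) + t * (4 * evR p1 t - 1) := by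
    filter_upwards [hall] with t ht
    rw [ht.2.2.1]; ring
  have hP2 : ∀ᶠ t in cocompact ℂ, t * deriv (evR p2) t =
      evR p2 t * (-2 * w t + 2 * evR q2 t - s) + a1 := by
    filter_upwards [hall] with t ht
    rw [ht.2.2.2]; ring
  have hone : evR 1 = fun _ => (1:ℂ) := by
    funext t; simp [evR]
  have dich1 : ∀ f : RatFunc ℂ, (evR f) =O[cocompact ℂ] (fun _ : ℂ => (1:ℂ)) ∨
      (fun t : ℂ => t) =O[cocompact ℂ] (evR f) := by
    intro f
    simpa [hone] using evR_dichotomy f 1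
  have dich2 : ∀ f : RatFunc ℂ, (fun _ : ℂ => (1:ℂ)) =O[cocompact ℂ] (evR f) ∨
      (fun t => t * evR f t) =O[cocompact ℂ] (fun _ : ℂ => (1:ℂ)) := by
    intro f
    simpa only [hone] using evR_dichotomy 1 f
  have dich3 : (evR q1) =O[cocompact ℂ] (evR q2) ∨ (evR q2) =O[cocompact ℂ] (evR q1) := by
    rcases evR_dichotomy q1 q2 with h | h
    · exact Or.inl h
    · right
      refine IsBigO.trans ?_ h
      exact (one_littleO_id.isBigO.mul (isBigO_refl (evR q2) _)).congr_left fun t => by ring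
  obtain ⟨bq1, bq2, bw⟩ := sasano_bounded (fun t => rfl) hQ1 hQ2 hP1 hP2
    (evR_deriv_isBigO q1) (evR_deriv_isBigO q2) (evR_deriv_isBigO p1) (evR_deriv_isBigO p2)
    (dich1 q1) (dich1 q2) dich3 (dich2 p1) (dich2 p2)
  have z : ∀ f : ℂ → ℂ, (fun t => f t - 0) = f := fun f => by simp
  have c2 := p_close hQ1 (by simpa only [z] using evR_deriv_isBigO q1 0) bq1 bw
  have c1 := p_close hQ2 (by simpa only [z] using evR_deriv_isBigO q2 0) bq2 bw
  have toT : ∀ {f : ℂ → ℂ} {c : ℂ}, (fun t => f t - c) =o[cocompact ℂ] (fun _ : ℂ => (1:ℂ)) →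
      Tendsto f (cocompact ℂ) (𝓝 c) := by
    intro f c h
    exact tendsto_sub_nhds_zero_iff.1 ((isLittleO_one_iff ℂ).1 h)
  have tp1 := toT c1
  have tp2 := toT c2
  have o1 := (evR_deriv_isBigO p1 (1/4)).trans_isLittleO c1
  have o2 := (evR_deriv_isBigO p2 (1/4)).trans_isLittleO c2
  have hm : ∀ {f g : ℂ → ℂ}, f =O[cocompact ℂ] (fun _ : ℂ => (1:ℂ)) →
      g =o[cocompact ℂ] (fun _ : ℂ => (1:ℂ)) →
      (fun t => f t * g t) =o[cocompact ℂ] (fun _ : ℂ => (1:ℂ)) := by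
    intro f g hf hg
    simpa using hf.mul_isLittleO hg
  have bsc : (fun _ : ℂ => s) =O[cocompact ℂ] (fun _ : ℂ => (1:ℂ)) :=
    isBigO_const_const _ one_ne_zero _
  have L1 : (fun t => 3 * evR q1 t - evR q2 t - (2 * s - 8 * a0)) =o[cocompact ℂ]
      (fun _ : ℂ => (1:ℂ)) := by
    have k1 := hm (((bw.const_mul_left (-2)).add (bq1.const_mul_left 2)).sub bsc) c1
    have k2 := (hm bq1 c1).add (hm bq2 c2)
    refine (((o1.sub k1).const_mul_left 8).add (k2.const_mul_left 4)).congr' ?_ EventuallyEq.rfl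
    filter_upwards [hP1] with t ht
    rw [ht]; simp only [hw]; ring
  have L2 : (fun t => 3 * evR q2 t - evR q1 t - (2 * s - 8 * a1)) =o[cocompact ℂ]
      (fun _ : ℂ => (1:ℂ)) := by
    have k1 := hm (((bw.const_mul_left (-2)).add (bq2.const_mul_left 2)).sub bsc) c2
    have k2 := (hm bq1 c1).add (hm bq2 c2)
    refine (((o2.sub k1).const_mul_left 8).add (k2.const_mul_left 4)).congr' ?_ EventuallyEq.rfl
    filter_upwards [hP2] with t ht
    rw [ht]; simp only [hw]; ring
  have M1 : (fun t => evR q1 t - (-2 * a0 + a3)) =o[cocompact ℂ] (fun _ : ℂ => (1:ℂ)) :=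
    (((L1.const_mul_left 3).add L2).const_mul_left (1/8)).congr_left fun t => by
      rw [hs]; ring
  have M2 : (fun t => evR q2 t - (-2 * a1 + a3)) =o[cocompact ℂ] (fun _ : ℂ => (1:ℂ)) :=
    (((L2.const_mul_left 3).add L1).const_mul_left (1/8)).congr_left fun t => by
      rw [hs]; ring
  have tq1 := toT M1
  have tq2 := toT M2
  have tw := (tq1.mul tp1).add (tq2.mul tp2)
  have D1 := (isLittleO_one_iff ℂ).1 ((evR_deriv_isBigO q1 (-2 * a0 + a3)).trans_isLittleO M1)
  have D2 := (isLittleO_one_iff ℂ).1 ((evR_deriv_isBigO q2 (-2 * a1 + a3)).trans_isLittleO M2)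
  refine ⟨tq1, tp1, tq2, tp2, ?_, ?_⟩
  · have h := (D2.sub (tq2.mul (((tw.const_mul 2).sub tq2).add_const s))).const_mul (1/4)
    refine (h.congr' ?_).trans (le_of_eq ?_)
    · filter_upwards [hQ2] with t ht
      rw [ht]; ring
    · rw [hs]; congr 1; ring
  · have h := (D1.sub (tq1.mul (((tw.const_mul 2).sub tq1).add_const s))).const_mul (1/4)
    refine (h.congr' ?_).trans (le_of_eq ?_)
    · filter_upwards [hQ1] with t ht
      rw [ht]; ring
    · rw [hs]; congr 1; ring
end

section
/- Let U ⊆ ℂ \ {0} be a nonempty connected open set and let (q1,p1,q2,p2) be a local solution of A5^(2)(α0,α1,α2,α3) on U with q1 identically 0 on U. Then one of the following holds: (1) α0 = 1/4, α3 = 1/2, and on U one has p1(t) = 1/4 + (4α1−1)(4α1+1)/(16t), q2(t) = −2α1 + 1/2, p2(t) = 1/4; (2) α0 = α3/2, α1 = α3/2, and on U one has p1(t) = 1/4, q2(t) = 0, p2(t) = 1/4; (3) α0 = α3/2, α1 = −α3/2, and on U one has p1(t) = 1/4, q2(t) = 2α3, p2(t) = 1/4. -/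
open Filter Topology

/-- `(q1, p1, q2, p2)` is a local (holomorphic) solution of the Sasano system
`A5^(2)(α0, α1, α2, α3)` on a set `U ⊆ ℂ` (the parameter `α2` does not occur in
the equations): the functions are holomorphic on `U` and the four differential
equations hold at every `t ∈ U`. -/
def IsLocalSasanoSol (a0 a1 a3 : ℂ) (U : Set ℂ) (q1 p1 q2 p2 : ℂ → ℂ) : Prop :=
  DifferentiableOn ℂ q1 U ∧ DifferentiableOn ℂ p1 U ∧
  DifferentiableOn ℂ q2 U ∧ DifferentiableOn ℂ p2 U ∧
  ∀ t ∈ U,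
    (t * deriv q1 t =
      2 * q1 t ^ 2 * p1 t - q1 t ^ 2 + (a0 + a1 + a3) * q1 t
        - t + 4 * t * p2 t + 2 * q1 t * q2 t * p2 t) ∧
    (t * deriv p1 t =
      -2 * q1 t * p1 t ^ 2 + 2 * q1 t * p1 t
        - (a0 + a1 + a3) * p1 t + a0 - 2 * p1 t * q2 t * p2 t) ∧
    (t * deriv q2 t =
      2 * q2 t ^ 2 * p2 t - q2 t ^ 2 + (a0 + a1 + a3) * q2 t
        - t + 4 * t * p1 t + 2 * q1 t * p1 t * q2 t) ∧
    (t * deriv p2 t =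
      -2 * q2 t * p2 t ^ 2 + 2 * q2 t * p2 t
        - (a0 + a1 + a3) * p2 t + a1 - 2 * q1 t * p1 t * p2 t)

theorem sasano_local_solution_q1_eq_zero (a0 a1 a2 a3 : ℂ)
    (hpar : a0 + a1 + 2 * a2 + a3 = 1 / 2)
    (U : Set ℂ) (hUopen : IsOpen U) (hUconn : IsConnected U) (hU0 : U ⊆ {(0 : ℂ)}ᶜ)
    (q1 p1 q2 p2 : ℂ → ℂ)
    (hsol : IsLocalSasanoSol a0 a1 a3 U q1 p1 q2 p2)
    (hq1 : ∀ t ∈ U, q1 t = 0) :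
    (a0 = 1 / 4 ∧ a3 = 1 / 2 ∧ ∀ t ∈ U,
      p1 t = 1 / 4 + (4 * a1 - 1) * (4 * a1 + 1) / (16 * t) ∧
      q2 t = -2 * a1 + 1 / 2 ∧ p2 t = 1 / 4) ∨
    (a0 = a3 / 2 ∧ a1 = a3 / 2 ∧ ∀ t ∈ U,
      p1 t = 1 / 4 ∧ q2 t = 0 ∧ p2 t = 1 / 4) ∨
    (a0 = a3 / 2 ∧ a1 = -a3 / 2 ∧ ∀ t ∈ U,
      p1 t = 1 / 4 ∧ q2 t = 2 * a3 ∧ p2 t = 1 / 4) := by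
  obtain ⟨-, hp1d, -, -, heq⟩ := hsol
  have hne : ∀ t ∈ U, t ≠ 0 := fun t ht => by simpa using hU0 ht
  -- a function which is constant on `U` has zero derivative there
  have hder : ∀ (f g : ℂ → ℂ), (∀ t ∈ U, f t = g t) → ∀ t ∈ U, deriv f t = deriv g t := by
    intro f g hfg t ht
    apply Filter.EventuallyEq.deriv_eq
    filter_upwards [hUopen.mem_nhds ht] with x hx using hfg x hx
  have hp2 : ∀ t ∈ U, p2 t = 1 / 4 := by
    intro t ht
    have h1 := (heq t ht).1
    have hd := hder q1 (fun _ => 0) hq1 t ht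
    rw [deriv_const] at hd
    rw [hd, hq1 t ht] at h1
    have h2 : t * (p2 t - 1 / 4) = 0 := by linear_combination -h1 / 4
    rcases mul_eq_zero.mp h2 with h | h
    · exact absurd h (hne t ht)
    · linear_combination h
  obtain ⟨c, hc⟩ : ∃ c : ℂ, c = (2 * (a0 + a1 + a3) - 8 * a1) / 3 := ⟨_, rfl⟩
  have hq2 : ∀ t ∈ U, q2 t = c := by
    intro t ht
    have h1 := (heq t ht).2.2.2
    have hd := hder p2 (fun _ => 1 / 4) hp2 t ht
    rw [deriv_const] at hd
    rw [hd, hq1 t ht, hp2 t ht] at h1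
    rw [hc]
    linear_combination -8 / 3 * h1
  obtain ⟨K, hK⟩ : ∃ K : ℂ, K = (c ^ 2 / 2 - (a0 + a1 + a3) * c) / 4 := ⟨_, rfl⟩
  have hp1 : ∀ t ∈ U, t * p1 t = t / 4 + K := by
    intro t ht
    have h1 := (heq t ht).2.2.1
    have hd := hder q2 (fun _ => c) hq2 t ht
    rw [deriv_const] at hd
    rw [hd, hq1 t ht, hp2 t ht, hq2 t ht] at h1
    rw [hK]
    linear_combination -1 / 4 * h1
  obtain ⟨m, hm⟩ : ∃ m : ℂ, m = a0 + a1 + a3 + c / 2 := ⟨_, rfl⟩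
  have hlin : ∀ t ∈ U, t * (a0 - m / 4) + K * (1 - m) = 0 := by
    intro t ht
    have h1 := (heq t ht).2.1
    have hd := hder (fun t => t * p1 t) (fun t => t / 4 + K) hp1 t ht
    have hdp : HasDerivAt p1 (deriv p1 t) t :=
      (hp1d.differentiableAt (hUopen.mem_nhds ht)).hasDerivAt
    have e1 : deriv (fun t => t * p1 t) t = 1 * p1 t + t * deriv p1 t :=
      ((hasDerivAt_id t).mul hdp).deriv
    have e2 : deriv (fun t : ℂ => t / 4 + K) t = 1 / 4 :=
      (((hasDerivAt_id t).div_const 4).add_const K).deriv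
    rw [e1, e2] at hd
    rw [hq1 t ht, hp2 t ht, hq2 t ht] at h1
    have h2 := hp1 t ht
    rw [hm]
    linear_combination (-t) * h1 + t * hd - (1 - (a0 + a1 + a3 + c / 2)) * h2
  obtain ⟨x, hx⟩ := hUconn.nonempty
  obtain ⟨y, hyU, hyx⟩ : ∃ y ∈ U, y ≠ x := by
    have h : ∀ᶠ y in 𝓝[≠] x, y ∈ U ∧ y ≠ x :=
      Filter.inter_mem (mem_nhdsWithin_of_mem_nhds (hUopen.mem_nhds hx)) self_mem_nhdsWithin
    exact h.exists
  have hA : a0 = m / 4 := by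
    have h : (y - x) * (a0 - m / 4) = 0 := by
      linear_combination hlin y hyU - hlin x hx
    rcases mul_eq_zero.mp h with h | h
    · exact absurd (sub_eq_zero.mp h) hyx
    · exact sub_eq_zero.mp h
  have hB : K * (1 - m) = 0 := by
    have h := hlin x hx
    rw [← hA] at h
    linear_combination h
  have h3 : a3 = 2 * a0 := by
    linear_combination -3 * hA - 3 / 4 * hm - 3 / 8 * hc
  by_cases hK0 : K = 0
  · right
    have hp1' : ∀ t ∈ U, p1 t = 1 / 4 := by
      intro t ht
      apply mul_left_cancel₀ (hne t ht)
      rw [hp1 t ht, hK0]; ring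
    have hcc : c * (c - 2 * (a0 + a1 + a3)) = 0 := by
      linear_combination -8 * hK + 8 * hK0
    rcases mul_eq_zero.mp hcc with h | h
    · left
      refine ⟨by linear_combination -h3 / 2, ?_, fun t ht => ⟨hp1' t ht, ?_, hp2 t ht⟩⟩
      · linear_combination -1 / 2 * (h - hc) - 1 / 6 * h3
      · rw [hq2 t ht, h]
    · right
      refine ⟨by linear_combination -h3 / 2, ?_, fun t ht => ⟨hp1' t ht, ?_, hp2 t ht⟩⟩
      · linear_combination -1 / 4 * (h - hc) + 1 / 6 * h3
      · rw [hq2 t ht]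
        linear_combination h / 2 + hc / 2 - 2 / 3 * h3
  · left
    have hm1 : m = 1 := by
      rcases mul_eq_zero.mp hB with h | h
      · exact absurd h hK0
      · linear_combination -h
    have ha0 : a0 = 1 / 4 := by rw [hA, hm1]
    have ha3 : a3 = 1 / 2 := by rw [h3, ha0]; norm_num
    have hcv : c = -2 * a1 + 1 / 2 := by rw [hc, ha0, ha3]; ring
    refine ⟨ha0, ha3, fun t ht => ⟨?_, ?_, hp2 t ht⟩⟩
    · have ht0 := hne t ht
      have hKv : K = (4 * a1 - 1) * (4 * a1 + 1) / 16 := by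
        rw [hK, hcv, ha0, ha3]; ring
      apply mul_left_cancel₀ ht0
      rw [hp1 t ht, hKv]
      field_simp
    · rw [hq2 t ht, hcv]
end

section
/- Let U ⊆ ℂ \ {0} be a nonempty connected open set and let (q1,p1,q2,p2) be a local solution of A5^(2)(α0,α1,α2,α3) on U with q2 identically 0 on U. Then one of the following holds: (1) α1 = 1/4, α3 = 1/2, and on U one has q1(t) = −2α0 + 1/2, p1(t) = 1/4, p2(t) = 1/4 + (4α0−1)(4α0+1)/(16t); (2) α0 = α3/2, α1 = α3/2, and on U one has q1(t) = 0, p1(t) = 1/4, p2(t) = 1/4; (3) α0 = −α3/2, α1 = α3/2, and on U one has q1(t) = 2α3, p1(t) = 1/4, p2(t) = 1/4. -/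
open Filter Topology

theorem sasano_local_solution_q2_eq_zero (a0 a1 a2 a3 : ℂ)
    (hpar : a0 + a1 + 2 * a2 + a3 = 1 / 2)
    (U : Set ℂ) (hUopen : IsOpen U) (hUconn : IsConnected U) (hU0 : U ⊆ {(0 : ℂ)}ᶜ)
    (q1 p1 q2 p2 : ℂ → ℂ)
    (hsol : IsLocalSasanoSol a0 a1 a3 U q1 p1 q2 p2)
    (hq2 : ∀ t ∈ U, q2 t = 0) :
    (a1 = 1 / 4 ∧ a3 = 1 / 2 ∧ ∀ t ∈ U,
      q1 t = -2 * a0 + 1 / 2 ∧ p1 t = 1 / 4 ∧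
      p2 t = 1 / 4 + (4 * a0 - 1) * (4 * a0 + 1) / (16 * t)) ∨
    (a0 = a3 / 2 ∧ a1 = a3 / 2 ∧ ∀ t ∈ U,
      q1 t = 0 ∧ p1 t = 1 / 4 ∧ p2 t = 1 / 4) ∨
    (a0 = -a3 / 2 ∧ a1 = a3 / 2 ∧ ∀ t ∈ U,
      q1 t = 2 * a3 ∧ p1 t = 1 / 4 ∧ p2 t = 1 / 4) := by
  obtain ⟨-, -, -, hp2, heq⟩ := hsol
  obtain ⟨x, hx⟩ := hUconn.nonempty
  obtain ⟨u, hu, v, hv, huv⟩ := (infinite_of_mem_nhds x (hUopen.mem_nhds hx)).nontrivial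
  have h0 : ∀ t ∈ U, t ≠ 0 := fun t ht => hU0 ht
  have dconst : ∀ (f : ℂ → ℂ) (c : ℂ), (∀ t ∈ U, f t = c) → ∀ t ∈ U, deriv f t = 0 := by
    intro f c hf t ht
    have h : f =ᶠ[𝓝 t] fun _ => c := by
      filter_upwards [hUopen.mem_nhds ht] with y hy using hf y hy
    rw [h.deriv_eq, deriv_const]
  have hp1 : ∀ t ∈ U, p1 t = 1 / 4 := by
    intro t ht
    have h := (heq t ht).2.2.1
    rw [dconst q2 0 hq2 t ht, hq2 t ht] at h
    apply mul_left_cancel₀ (h0 t ht)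
    linear_combination -h / 4
  obtain ⟨c, hc⟩ : ∃ c, c = (2 * (a0 + a1 + a3) - 8 * a0) / 3 := ⟨_, rfl⟩
  have hq1 : ∀ t ∈ U, q1 t = c := by
    intro t ht
    have h := (heq t ht).2.1
    rw [dconst p1 _ hp1 t ht, hq2 t ht, hp1 t ht] at h
    rw [hc]
    linear_combination -8 / 3 * h
  obtain ⟨k, hk⟩ : ∃ k, k = c ^ 2 / 2 - (a0 + a1 + a3) * c := ⟨_, rfl⟩
  have hP : ∀ t ∈ U, 4 * (t * p2 t) - t = k := by
    intro t ht
    have h := (heq t ht).1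
    rw [dconst q1 _ hq1 t ht, hq2 t ht, hp1 t ht, hq1 t ht] at h
    rw [hk]
    linear_combination -h
  have hlin : ∀ t ∈ U, (4 * a1 - (a0 + a1 + a3 + c / 2)) * t
      + k * (1 - (a0 + a1 + a3 + c / 2)) = 0 := by
    intro t ht
    have hd : HasDerivAt p2 (deriv p2 t) t :=
      ((hp2 t ht).differentiableAt (hUopen.mem_nhds ht)).hasDerivAt
    have h1 := ((((hasDerivAt_id t).mul hd).const_mul 4).sub (hasDerivAt_id t)).deriv
    have h2 := dconst _ k hP t ht
    have h3 : 4 * (1 * p2 t + t * deriv p2 t) - 1 = 0 := by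
      rw [← h2]; exact h1.symm
    have h := (heq t ht).2.2.2
    rw [hq2 t ht, hp1 t ht, hq1 t ht] at h
    have hPt := hP t ht
    linear_combination (-4 * t) * h + t * h3 + (a0 + a1 + a3 + c / 2 - 1) * hPt
  have hs : 4 * a1 - (a0 + a1 + a3 + c / 2) = 0 := by
    apply mul_right_cancel₀ (sub_ne_zero.2 huv)
    linear_combination hlin u hu - hlin v hv
  have hks : k * (1 - (a0 + a1 + a3 + c / 2)) = 0 := by
    linear_combination hlin u hu - u * hs
  rcases mul_eq_zero.1 hks with h | h
  · have hp2c : ∀ t ∈ U, p2 t = 1 / 4 := by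
      intro t ht
      apply mul_left_cancel₀ (h0 t ht)
      linear_combination (hP t ht) / 4 + h / 4
    have hcc : c * (c - 2 * (a0 + a1 + a3)) = 0 := by
      linear_combination -2 * hk + 2 * h
    rcases mul_eq_zero.1 hcc with hz | hz
    · right; left
      refine ⟨?_, ?_, fun t ht => ⟨(hq1 t ht).trans hz, hp1 t ht, hp2c t ht⟩⟩ <;> grind
    · right; right
      refine ⟨?_, ?_, fun t ht => ⟨(hq1 t ht).trans ?_, hp1 t ht, hp2c t ht⟩⟩ <;> grind
  · left
    have e1 : a1 = 1 / 4 := by linear_combination hs / 4 - h / 4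
    have e3 : a3 = 1 / 2 := by grind
    have ec : c = -2 * a0 + 1 / 2 := by grind
    refine ⟨e1, e3, fun t ht => ⟨(hq1 t ht).trans ec, hp1 t ht, ?_⟩⟩
    have hPt := hP t ht
    have ht0 := h0 t ht
    rw [hk, ec, e1, e3] at hPt
    field_simp
    linear_combination 16 * hPt
end

section
/- Let (q1,p1,q2,p2) be a rational solution of A5^(2)(α0,α1,α2,α3). Then one of the following holds: (1) none of q1, p1, q2, p2 has a pole at 0; (2) p1 has a simple pole at 0 and none of q1, q2, p2 has a pole at 0; (3) p2 has a simple pole at 0 and none of q1, p1, q2 has a pole at 0. -/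
open Filter Topology Polynomial

/-- A rational function has a simple pole at `c` with residue `r ≠ 0`
if `(t - c) * f t → r` as `t → c`. -/
def SimplePoleAt (f : RatFunc ℂ) (c : ℂ) : Prop :=
  ∃ r : ℂ, r ≠ 0 ∧ Tendsto (fun t => (t - c) * evR f t) (𝓝[≠] c) (𝓝 r)

/-- `f` agrees near `0` (punctured) with a function analytic at `0` of value `c`. -/
def HolV (f : ℂ → ℂ) (c : ℂ) : Prop :=
  ∃ g : ℂ → ℂ, AnalyticAt ℂ g 0 ∧ g 0 = c ∧ f =ᶠ[𝓝[≠] 0] g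

namespace HolV

theorem congr {f g : ℂ → ℂ} {c d : ℂ} (h : HolV f c) (e : g =ᶠ[𝓝[≠] 0] f) (hc : c = d) :
    HolV g d := by
  obtain ⟨k, h1, h2, h3⟩ := h
  exact ⟨k, h1, h2.trans hc, e.trans h3⟩

theorem const (c : ℂ) : HolV (fun _ => c) c := ⟨_, analyticAt_const, rfl, EventuallyEq.rfl⟩

theorem id : HolV (fun t => t) 0 := ⟨_, analyticAt_id, rfl, EventuallyEq.rfl⟩

theorem add {f g : ℂ → ℂ} {c d : ℂ} (hf : HolV f c) (hg : HolV g d) :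
    HolV (fun t => f t + g t) (c + d) := by
  obtain ⟨F, h1, h2, h3⟩ := hf
  obtain ⟨G, k1, k2, k3⟩ := hg
  exact ⟨fun t => F t + G t, h1.add k1, by simp [h2, k2], h3.add k3⟩

theorem sub {f g : ℂ → ℂ} {c d : ℂ} (hf : HolV f c) (hg : HolV g d) :
    HolV (fun t => f t - g t) (c - d) := by
  obtain ⟨F, h1, h2, h3⟩ := hf
  obtain ⟨G, k1, k2, k3⟩ := hg
  exact ⟨fun t => F t - G t, h1.sub k1, by simp [h2, k2], h3.sub k3⟩

theorem mul {f g : ℂ → ℂ} {c d : ℂ} (hf : HolV f c) (hg : HolV g d) :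
    HolV (fun t => f t * g t) (c * d) := by
  obtain ⟨F, h1, h2, h3⟩ := hf
  obtain ⟨G, k1, k2, k3⟩ := hg
  exact ⟨fun t => F t * G t, h1.mul k1, by simp [h2, k2], h3.mul k3⟩

theorem inv {f : ℂ → ℂ} {c : ℂ} (hf : HolV f c) (hc : c ≠ 0) :
    HolV (fun t => (f t)⁻¹) c⁻¹ := by
  obtain ⟨F, h1, h2, h3⟩ := hf
  exact ⟨fun t => (F t)⁻¹, h1.inv (by rwa [h2]), by simp [h2], h3.inv⟩

theorem pow {n : ℕ} (hn : n ≠ 0) : HolV (fun t => t ^ n) 0 :=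
  ⟨fun t => t ^ n, analyticAt_id.pow n, by simp [hn], EventuallyEq.rfl⟩

theorem tendsto {f : ℂ → ℂ} {c : ℂ} (hf : HolV f c) : Tendsto f (𝓝[≠] 0) (𝓝 c) := by
  obtain ⟨F, h1, h2, h3⟩ := hf
  rw [tendsto_congr' h3, ← h2]
  exact h1.continuousAt.tendsto.mono_left nhdsWithin_le_nhds

theorem unique {f : ℂ → ℂ} {c d : ℂ} (hf : HolV f c) (hg : HolV f d) : c = d :=
  tendsto_nhds_unique hf.tendsto hg.tendsto

theorem unique' {f g : ℂ → ℂ} {c d : ℂ} (hf : HolV f c) (hg : HolV g d)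
    (e : f =ᶠ[𝓝[≠] 0] g) : c = d :=
  hf.unique (hg.congr e rfl)

theorem ne_zero {f : ℂ → ℂ} {c : ℂ} (hf : HolV f c) (hc : c ≠ 0) :
    ∀ᶠ t in 𝓝[≠] (0 : ℂ), f t ≠ 0 :=
  hf.tendsto.eventually_ne hc

theorem tne : ∀ᶠ t in 𝓝[≠] (0 : ℂ), t ≠ 0 := eventually_mem_nhdsWithin

/-- Euler derivative of a function with `t ^ n * f` analytic. -/
theorem euler {f : ℂ → ℂ} {c : ℂ} (n : ℤ) (hf : HolV (fun t => t ^ n * f t) c) :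
    HolV (fun t => t ^ n * (t * deriv f t)) (-n * c) := by
  obtain ⟨F, h1, h2, h3⟩ := hf
  refine ⟨fun t => -n * F t + t * deriv F t, ?_, by simp [h2], ?_⟩
  · exact (analyticAt_const.mul h1).add (analyticAt_id.mul h1.deriv)
  · have hA : ∀ᶠ t in 𝓝[≠] (0 : ℂ), AnalyticAt ℂ F t :=
      h1.eventually_analyticAt.filter_mono nhdsWithin_le_nhds
    have h4 := eventually_eventually_nhdsWithin.2 h3
    filter_upwards [hA, h4, tne] with t ht h5 h0
    have hnh : 𝓝[≠] (0 : ℂ) ≤ 𝓝[≠] 0 := le_rfl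
    have h5' : ∀ᶠ x in 𝓝 t, x ^ n * f x = F x := by
      rw [(isOpen_compl_singleton (x := (0:ℂ))).nhdsWithin_eq h0] at h5
      exact h5
    have h6 : f =ᶠ[𝓝 t] fun x => x ^ (-n) * F x := by
      filter_upwards [h5', isOpen_ne.mem_nhds h0] with x hx hx0
      have : x ≠ 0 := hx0
      rw [← hx, ← mul_assoc, ← zpow_add₀ this]; simp
    have h7 : HasDerivAt (fun x => x ^ (-n) * F x)
        (((-n : ℤ) : ℂ) * t ^ (-n - 1) * F t + t ^ (-n) * deriv F t) t :=
      (hasDerivAt_zpow (-n) t (Or.inl h0)).mul ht.differentiableAt.hasDerivAt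
    rw [h6.deriv_eq, h7.deriv]
    rw [zpow_sub₀ h0, zpow_neg]
    have := zpow_ne_zero n h0
    push_cast
    field_simp

theorem eulerN {f : ℂ → ℂ} {c : ℂ} (n : ℕ) (hf : HolV (fun t => t ^ n * f t) c) :
    HolV (fun t => t ^ n * (t * deriv f t)) (-n * c) := by
  have := euler (f := f) (c := c) n (by simpa using hf)
  simpa using this

theorem euler0 {f : ℂ → ℂ} {c : ℂ} (hf : HolV f c) :
    HolV (fun t => t * deriv f t) 0 := by
  have := euler (f := f) (c := c) 0 (by simpa using hf)
  simpa using this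

theorem euler1 {f : ℂ → ℂ} {c : ℂ} (hf : HolV (fun t => t⁻¹ * f t) c) :
    HolV (fun t => t⁻¹ * (t * deriv f t)) c := by
  have := euler (f := f) (c := c) (-1) (by simpa using hf)
  simpa using this

end HolV

/-- `f` has a pole of order `n ≥ 1` with leading coefficient `c`. -/
def PoleV (f : ℂ → ℂ) (n : ℕ) (c : ℂ) : Prop :=
  n ≠ 0 ∧ c ≠ 0 ∧ HolV (fun t => t ^ n * f t) c

theorem PoleV.not_hol {f : ℂ → ℂ} {n : ℕ} {c d : ℂ} (h : PoleV f n c) (h' : HolV f d) : False := by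
  obtain ⟨hn, hc, h⟩ := h
  apply hc
  have := (HolV.pow hn).mul h'
  simpa using h.unique this

theorem PoleV.le {f : ℂ → ℂ} {n m : ℕ} {c d : ℂ} (h : PoleV f n c)
    (h' : HolV (fun t => t ^ m * f t) d) : n ≤ m := by
  obtain ⟨hn, hc, h⟩ := h
  by_contra hlt
  push Not at hlt
  have h1 := (HolV.pow (n := n - m) (by omega)).mul h'
  apply hc
  have := h.unique' h1 (Eventually.of_forall fun t => by
    simp only [← mul_assoc, ← pow_add]
    rw [show n - m + m = n by omega])
  simpa using this

theorem PoleV.eq {f : ℂ → ℂ} {n m : ℕ} {c d : ℂ} (h : PoleV f n c)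
    (h' : PoleV f m d) : n = m :=
  le_antisymm (h.le h'.2.2) (h'.le h.2.2)

/-- Logarithmic derivative argument. -/
theorem PoleV.log {p X b : ℂ → ℂ} {n : ℕ} {c d : ℂ} (h : PoleV p n c) (hb : HolV b d)
    (he : ∀ᶠ t in 𝓝[≠] (0 : ℂ), t * deriv p t = - p t * X t + b t) : HolV X n := by
  obtain ⟨hn, hc, h⟩ := h
  have h1 := (((HolV.pow hn).mul hb).sub (HolV.eulerN n h)).mul (h.inv hc)
  refine h1.congr ?_ (by field_simp; ring)
  filter_upwards [he, HolV.tne, h.ne_zero hc] with t ht h0 h2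
  rw [ht]
  have h3 : p t ≠ 0 := right_ne_zero_of_mul h2
  field_simp
  ring

/-- The system near `0`. -/
def Sys (A a0 a1 : ℂ) (q1 p1 q2 p2 : ℂ → ℂ) : Prop :=
  ∀ᶠ t in 𝓝[≠] (0 : ℂ),
    (t * deriv q1 t = q1 t * (2 * (q1 t * p1 t + q2 t * p2 t) - q1 t + A) - t + 4 * t * p2 t) ∧
    (t * deriv p1 t = - p1 t * (2 * (q1 t * p1 t + q2 t * p2 t) - 2 * q1 t + A) + a0) ∧
    (t * deriv q2 t = q2 t * (2 * (q1 t * p1 t + q2 t * p2 t) - q2 t + A) - t + 4 * t * p1 t) ∧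
    (t * deriv p2 t = - p2 t * (2 * (q1 t * p1 t + q2 t * p2 t) - 2 * q2 t + A) + a1)

theorem Sys.symm {A a0 a1 : ℂ} {q1 p1 q2 p2 : ℂ → ℂ} (h : Sys A a0 a1 q1 p1 q2 p2) :
    Sys A a1 a0 q2 p2 q1 p1 := by
  filter_upwards [h] with t ht
  obtain ⟨h1, h2, h3, h4⟩ := ht
  refine ⟨?_, ?_, ?_, ?_⟩
  · rw [h3]; ring
  · rw [h4]; ring
  · rw [h1]; ring
  · rw [h2]; ring

/-- If `p1` has a pole, the combination `X1` is analytic. -/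
theorem Sys.X1 {A a0 a1 : ℂ} {q1 p1 q2 p2 : ℂ → ℂ} (h : Sys A a0 a1 q1 p1 q2 p2)
    {n : ℕ} {r : ℂ} (hp : PoleV p1 n r) :
    HolV (fun t => 2 * (q1 t * p1 t + q2 t * p2 t) - 2 * q1 t + A) n :=
  hp.log (HolV.const a0) (h.mono fun _ ht => ht.2.1)

/-- Both `p`'s analytic and `q1` has a pole: then `q1 * p1` is analytic and so is `2s - q1`. -/
theorem Sys.case4a {A a0 a1 : ℂ} {q1 p1 q2 p2 : ℂ → ℂ} (h : Sys A a0 a1 q1 p1 q2 p2)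
    {x y c : ℂ} {k : ℕ} (h1 : HolV p1 x) (h2 : HolV p2 y) (hq : PoleV q1 k c) :
    (∃ d, HolV (fun t => q1 t * p1 t) d) ∧
    (∃ d, HolV (fun t => -(2 * (q1 t * p1 t + q2 t * p2 t) - q1 t + A)) d) := by
  have hX : HolV (fun t => -(2 * (q1 t * p1 t + q2 t * p2 t) - q1 t + A)) k := by
    refine hq.log (b := fun t => (4 * p2 t - 1) * t)
      ((((HolV.const 4).mul h2).sub (HolV.const 1)).mul HolV.id) ?_
    filter_upwards [h] with t ht
    rw [ht.1]; ring
  refine ⟨⟨_, (((h1.euler0).sub (HolV.const a0)).sub (h1.mul hX)).congr ?_ rfl⟩, _, hX⟩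
  filter_upwards [h] with t ht
  rw [ht.2.1]; ring

theorem Sys.case4b {A a0 a1 : ℂ} {q1 p1 q2 p2 : ℂ → ℂ} (h : Sys A a0 a1 q1 p1 q2 p2)
    {x y c : ℂ} {k : ℕ} (h1 : HolV p1 x) (h2 : HolV p2 y) (hq : PoleV q1 k c)
    (hd : (∃ d, HolV q2 d) ∨ ∃ l d, PoleV q2 l d) : False := by
  obtain ⟨⟨d, hu⟩, e, hX⟩ := h.case4a h1 h2 hq
  have hw : ∃ f, HolV (fun t => q2 t * p2 t) f := by
    rcases hd with ⟨d, hd⟩ | ⟨l, d, hd⟩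
    · exact ⟨_, hd.mul h2⟩
    · exact (h.symm.case4a h2 h1 hd).1
  obtain ⟨f, hw⟩ := hw
  refine hq.not_hol (((hX.add (HolV.const A)).add ((HolV.const 2).mul (hu.add hw))).congr ?_ rfl)
  exact Eventually.of_forall fun t => by ring

/-- Multiply the `q1` equation by `t ^ (2k)` when `q1` has a pole of order `k`, given `X1`. -/
theorem Sys.qpole {A a0 a1 : ℂ} {q1 p1 q2 p2 : ℂ → ℂ} (h : Sys A a0 a1 q1 p1 q2 p2)
    {k : ℕ} {x c : ℂ} (hk : k ≠ 0) (hq : HolV (fun t => t ^ k * q1 t) c)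
    (hX : HolV (fun t => 2 * (q1 t * p1 t + q2 t * p2 t) - 2 * q1 t + A) x) :
    HolV (fun t => t ^ (2 * k + 1) * p2 t) (- c ^ 2 / 4) := by
  have h1 := ((((HolV.pow hk).mul (hq.eulerN k)).sub ((HolV.pow hk).mul (hq.mul hX))).sub
    (hq.mul hq)).add ((HolV.pow (n := 2 * k) (by omega)).mul HolV.id)
  refine (h1.mul (HolV.const (1 / 4))).congr ?_ (by ring)
  filter_upwards [h] with t ht
  rw [ht.1]; ring

theorem Sys.qhol {A a0 a1 : ℂ} {q1 p1 q2 p2 : ℂ → ℂ} (h : Sys A a0 a1 q1 p1 q2 p2)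
    {x c : ℂ} (hq : HolV q1 c)
    (hX : HolV (fun t => 2 * (q1 t * p1 t + q2 t * p2 t) - 2 * q1 t + A) x) :
    HolV (fun t => t ^ 1 * p2 t) (- c * (x + c) / 4) := by
  have h1 := ((hq.euler0.sub (hq.mul (hX.add hq)))).add HolV.id
  refine (h1.mul (HolV.const (1 / 4))).congr ?_ (by ring)
  filter_upwards [h] with t ht
  rw [ht.1]; ring

/-- Both `p1` and `p2` having poles is impossible. -/
theorem Sys.case1 {A a0 a1 : ℂ} {q1 p1 q2 p2 : ℂ → ℂ} (h : Sys A a0 a1 q1 p1 q2 p2)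
    {n m : ℕ} {r s : ℂ} (hp1 : PoleV p1 n r) (hp2 : PoleV p2 m s)
    (hd : (∃ d, HolV q1 d) ∨ ∃ l d, PoleV q1 l d) : False := by
  have hX1 := h.X1 hp1
  have hX2 := h.symm.X1 hp2
  -- the difference
  have hdiff : HolV (fun t => q2 t - q1 t) ((n - m) * (1 / 2)) := by
    refine ((hX1.sub hX2).mul (HolV.const (1 / 2))).congr ?_ rfl
    exact Eventually.of_forall fun t => by ring
  have hs : HolV (fun t => (q1 t * p1 t + q2 t * p2 t) - q1 t) ((n - A) * (1 / 2)) := by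
    refine ((hX1.sub (HolV.const A)).mul (HolV.const (1 / 2))).congr ?_ rfl
    exact Eventually.of_forall fun t => by ring
  rcases hd with ⟨c, hq⟩ | ⟨k, c, hk, hc, hq⟩
  · have hq2 : HolV q2 (c + (n - m) * (1 / 2)) :=
      (hq.add hdiff).congr (Eventually.of_forall fun t => by ring) rfl
    have e2 := h.qhol hq hX1
    have e1 := h.symm.qhol hq2 hX2
    have hn1 : n = 1 := le_antisymm (hp1.le e1) (Nat.one_le_iff_ne_zero.2 hp1.1)
    have hm1 : m = 1 := le_antisymm (hp2.le e2) (Nat.one_le_iff_ne_zero.2 hp2.1)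
    subst hn1 hm1
    have hr := hp1.2.2.unique e1
    have hs' := (((hq.mul e1).add (hq2.mul e2))).unique' (HolV.id.mul (hs.add hq))
      (Eventually.of_forall fun t => by ring)
    have hr0 := hp1.2.1
    rw [hr] at hr0
    apply hr0
    push_cast at hs' ⊢
    have h3 : c * (c * (1 + c)) = 0 := by linear_combination (-2) * hs'
    have h4 : c * (1 + c) = 0 := by
      rcases mul_eq_zero.1 h3 with h | h
      · rw [h]; ring
      · exact h
    linear_combination (-1 / 4) * h4
  · have hq2 : HolV (fun t => t ^ k * q2 t) c :=
      (hq.add ((HolV.pow hk).mul hdiff)).congr (Eventually.of_forall fun t => by ring) (by ring)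
    have e2 := h.qpole hk hq hX1
    have e1 := h.symm.qpole hk hq2 hX2
    have := ((hq.mul e1).add (hq2.mul e2)).unique'
      ((HolV.pow (n := 2 * k + 1) (by omega)).mul (((HolV.pow hk).mul hs).add hq))
      (Eventually.of_forall fun t => by ring)
    have h3 : c ^ 3 = 0 := by linear_combination (-2) * this
    exact hc (pow_eq_zero_iff (by norm_num) |>.1 h3)

/-- `p1` has a pole and `p2` does not. -/
theorem Sys.case2 {A a0 a1 : ℂ} {q1 p1 q2 p2 : ℂ → ℂ} (h : Sys A a0 a1 q1 p1 q2 p2)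
    {n : ℕ} {r y : ℂ} (hp1 : PoleV p1 n r) (hp2 : HolV p2 y)
    (hd1 : (∃ d, HolV q1 d) ∨ ∃ l d, PoleV q1 l d)
    (hd2 : (∃ d, HolV q2 d) ∨ ∃ l d, PoleV q2 l d) :
    n = 1 ∧ (∃ d, HolV q1 d) ∧ ∃ d, HolV q2 d := by
  have hX1 := h.X1 hp1
  have hq1 : ∃ d, HolV q1 d := by
    rcases hd1 with hd | ⟨k, c, hk, hc, hq⟩
    · exact hd
    · exfalso
      have e := (h.qpole hk hq hX1).unique ((HolV.pow (n := 2 * k + 1) (by omega)).mul hp2)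
      have h3 : c ^ 2 = 0 := by linear_combination (-4) * e
      exact hc (pow_eq_zero_iff (by norm_num) |>.1 h3)
  obtain ⟨c, hq1⟩ := hq1
  have hs : HolV (fun t => q1 t * p1 t + q2 t * p2 t) ((n - A) * (1 / 2) + c) := by
    refine (((hX1.sub (HolV.const A)).mul (HolV.const (1 / 2))).add hq1).congr ?_ rfl
    exact Eventually.of_forall fun t => by ring
  rcases hd2 with ⟨d, hq2⟩ | ⟨l, d, hl, hd, hq2⟩
  · have e : HolV (fun t => t ^ 1 * p1 t)
        ((0 - d * (2 * ((n - A) * (1 / 2) + c) - d + A) + 0) * (1 / 4)) := by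
      refine (((hq2.euler0.sub (hq2.mul ((((HolV.const 2).mul hs).sub hq2).add
        (HolV.const A)))).add HolV.id).mul (HolV.const (1 / 4))).congr ?_ rfl
      filter_upwards [h] with t ht
      rw [ht.2.2.1]; ring
    exact ⟨le_antisymm (hp1.le e) (Nat.one_le_iff_ne_zero.2 hp1.1), ⟨_, hq1⟩, _, hq2⟩
  · exfalso
    have e : HolV (fun t => t ^ (2 * l + 1) * p1 t) (d ^ 2 / 4) := by
      refine (((((HolV.pow hl).mul (hq2.eulerN l)).sub ((HolV.pow hl).mul (hq2.mul
        (((HolV.const 2).mul hs).add (HolV.const A))))).add ((hq2.mul hq2).add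
        ((HolV.pow (n := 2 * l) (by omega)).mul HolV.id))).mul
        (HolV.const (1 / 4))).congr ?_ (by ring)
      filter_upwards [h] with t ht
      rw [ht.2.2.1]; ring
    have hn : n = 2 * l + 1 :=
      hp1.eq ⟨by omega, div_ne_zero (pow_ne_zero 2 hd) (by norm_num), e⟩
    have hw : HolV (fun t => q2 t * p2 t)
        ((0 - a1 + y * (2 * ((n - A) * (1 / 2) + c) + A)) * (1 / 2)) := by
      refine (((hp2.euler0.sub (HolV.const a1)).add (hp2.mul (((HolV.const 2).mul hs).add
        (HolV.const A)))).mul (HolV.const (1 / 2))).congr ?_ rfl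
      filter_upwards [h] with t ht
      rw [ht.2.2.2]; ring
    have hy : y = 0 := by
      have := (hq2.mul hp2).unique' ((HolV.pow hl).mul hw) (Eventually.of_forall fun t => by ring)
      simpa [hd] using this
    have hu : HolV (fun t => q1 t * p1 t) _ :=
      (hs.sub hw).congr (Eventually.of_forall fun t => by ring) rfl
    have hg : HolV (fun t => t⁻¹ * q1 t) 0 := by
      refine (((HolV.pow (n := 2 * l) (by omega)).mul hu).mul (hp1.2.2.inv hp1.2.1)).congr ?_
        (by ring)
      filter_upwards [HolV.tne, hp1.2.2.ne_zero hp1.2.1] with t h0 h2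
      have h3 : p1 t ≠ 0 := right_ne_zero_of_mul h2
      rw [hn]
      field_simp
      ring
    have := (hg.euler1).unique' (((hg.mul (hX1.add hq1)).sub (HolV.const 1)).add
      ((HolV.const 4).mul hp2)) (by
        filter_upwards [h, HolV.tne] with t ht h0
        rw [ht.1]; field_simp; ring)
    rw [hy] at this
    norm_num at this

/-- Local structure of a rational function at `0`. -/
theorem ratFunc_dichotomy (f : RatFunc ℂ) :
    (NoPoleAt f 0 ∧ ∃ d, HolV (evR f) d) ∨ (∃ l d, PoleV (evR f) l d) := by
  by_cases hf : f.denom.eval 0 = 0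
  · right
    obtain ⟨D, hD, hD0⟩ := Polynomial.exists_eq_pow_rootMultiplicity_mul_and_not_dvd f.denom
      f.denom_ne_zero 0
    set n := f.denom.rootMultiplicity 0 with hn
    have hn0 : n ≠ 0 := by
      have := (Polynomial.rootMultiplicity_pos f.denom_ne_zero).2 hf
      omega
    have hDe : D.eval 0 ≠ 0 := fun h => hD0 (Polynomial.dvd_iff_isRoot.2 h)
    have hN : f.num.eval 0 ≠ 0 := by
      intro h
      obtain ⟨a, b, hab⟩ := f.isCoprime_num_denom
      have := congrArg (Polynomial.eval 0) hab
      simp [h, hf] at this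
    refine ⟨n, f.num.eval 0 / D.eval 0, hn0, div_ne_zero hN hDe,
      fun t => f.num.eval t / D.eval t, ?_, rfl, ?_⟩
    · exact (AnalyticAt.aeval_polynomial analyticAt_id f.num).div
        (AnalyticAt.aeval_polynomial analyticAt_id D) hDe
    · filter_upwards [HolV.tne] with t ht
      have : f.denom.eval t = t ^ n * D.eval t := by
        rw [hD]; simp
      rw [evR, this]
      have := pow_ne_zero n ht
      field_simp
  · left
    refine ⟨hf, evR f 0, evR f, ?_, rfl, EventuallyEq.rfl⟩
    exact (AnalyticAt.aeval_polynomial analyticAt_id f.num).div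
        (AnalyticAt.aeval_polynomial analyticAt_id f.denom) hf

theorem eventually_noPole (f : RatFunc ℂ) : ∀ᶠ t in 𝓝[≠] (0 : ℂ), NoPoleAt f t := by
  have h : AnalyticAt ℂ (fun t => f.denom.eval t) 0 :=
    AnalyticAt.aeval_polynomial analyticAt_id f.denom
  have hfin : {t : ℂ | f.denom.eval t = 0}.Finite := by
    have := f.denom.rootSet_finite ℂ
    refine this.subset fun t ht => ?_
    rw [Polynomial.mem_rootSet]
    exact ⟨f.denom_ne_zero, by simpa using ht⟩
  have h2 : ({t : ℂ | f.denom.eval t = 0} \ {0}).Finite := hfin.subset Set.sdiff_subset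
  have h3 : ({t : ℂ | f.denom.eval t = 0} \ {0})ᶜ ∈ 𝓝 (0 : ℂ) :=
    h2.isClosed.isOpen_compl.mem_nhds (by simp)
  filter_upwards [mem_nhdsWithin_of_mem_nhds h3, HolV.tne] with t ht h0 h4
  exact ht ⟨h4, h0⟩

theorem PoleV.simple {f : RatFunc ℂ} {r : ℂ} (h : PoleV (evR f) 1 r) : SimplePoleAt f 0 :=
  ⟨r, h.2.1, by simpa using h.2.2.tendsto⟩

theorem noPole_of_hol {f : RatFunc ℂ} {d : ℂ} (h : HolV (evR f) d) : NoPoleAt f 0 := by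
  rcases ratFunc_dichotomy f with h1 | ⟨l, c, h1⟩
  · exact h1.1
  · exact (h1.not_hol h).elim

theorem sasano_pole_structure_at_zero (a0 a1 a2 a3 : ℂ)
    (hpar : a0 + a1 + 2 * a2 + a3 = 1 / 2)
    (q1 p1 q2 p2 : RatFunc ℂ)
    (hsol : IsSasanoSol a0 a1 a3 q1 p1 q2 p2) :
    (NoPoleAt q1 0 ∧ NoPoleAt p1 0 ∧ NoPoleAt q2 0 ∧ NoPoleAt p2 0) ∨
    (SimplePoleAt p1 0 ∧ NoPoleAt q1 0 ∧ NoPoleAt q2 0 ∧ NoPoleAt p2 0) ∨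
    (SimplePoleAt p2 0 ∧ NoPoleAt q1 0 ∧ NoPoleAt p1 0 ∧ NoPoleAt q2 0) := by
  have hS : Sys (a0 + a1 + a3) a0 a1 (evR q1) (evR p1) (evR q2) (evR p2) := by
    filter_upwards [eventually_noPole q1, eventually_noPole p1, eventually_noPole q2,
      eventually_noPole p2] with t h1 h2 h3 h4
    obtain ⟨e1, e2, e3, e4⟩ := hsol t h1 h2 h3 h4
    refine ⟨?_, ?_, ?_, ?_⟩
    · rw [e1]; ring
    · rw [e2]; ring
    · rw [e3]; ring
    · rw [e4]; ring
  have hd1 := (ratFunc_dichotomy q1).imp And.right _root_.id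
  have hd2 := (ratFunc_dichotomy q2).imp And.right _root_.id
  rcases ratFunc_dichotomy p1 with ⟨n1, x, hp1⟩ | ⟨n, r, hp1⟩
  · rcases ratFunc_dichotomy p2 with ⟨n2, y, hp2⟩ | ⟨m, s, hp2⟩
    · left
      refine ⟨?_, n1, ?_, n2⟩
      · rcases hd1 with ⟨d, h⟩ | ⟨l, d, h⟩
        · exact noPole_of_hol h
        · exact (hS.case4b hp1 hp2 h hd2).elim
      · rcases hd2 with ⟨d, h⟩ | ⟨l, d, h⟩
        · exact noPole_of_hol h
        · exact (hS.symm.case4b hp2 hp1 h hd1).elim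
    · right; right
      obtain ⟨rfl, ⟨d, h2⟩, e, h1⟩ := hS.symm.case2 hp2 hp1 hd2 hd1
      exact ⟨hp2.simple, noPole_of_hol h1, n1, noPole_of_hol h2⟩
  · rcases ratFunc_dichotomy p2 with ⟨n2, y, hp2⟩ | ⟨m, s, hp2⟩
    · right; left
      obtain ⟨rfl, ⟨d, h1⟩, e, h2⟩ := hS.case2 hp1 hp2 hd1 hd2
      exact ⟨hp1.simple, noPole_of_hol h1, noPole_of_hol h2, n2⟩
    · exact (hS.case1 hp1 hp2 hd1).elim
end

section
/- Let (q1,p1,q2,p2) be a rational solution of A5^(2)(α0,α1,α2,α3) such that none of q1, p1, q2, p2 has a pole at 0. Then one of the following four cases holds: (1) q1(0) = 0, −(α0+α1+α3)·p1(0) + α0 = 0, q2(0) = 0, −(α0+α1+α3)·p2(0) + α1 = 0; (2) q1(0) = 0, (−α0+α1−α3)·p1(0) + α0 = 0, q2(0) = α0−α1+α3, (−α0+α1−α3)·p2(0) − α1 = 0; (3) q1(0) = −α0+α1+α3, (α0−α1−α3)·p1(0) − α0 = 0, q2(0) = 0, (α0−α1−α3)·p2(0) + α1 = 0; (4) q1(0)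 = −α0−α1+α3, (α0+α1−α3)·p1(0) − α0 = 0, q2(0) = −α0−α1+α3, (α0+α1−α3)·p2(0) − α1 = 0. -/
open Filter Topology Polynomial

theorem sasano_holomorphic_at_zero_values (a0 a1 a2 a3 : ℂ)
    (hpar : a0 + a1 + 2 * a2 + a3 = 1 / 2)
    (q1 p1 q2 p2 : RatFunc ℂ)
    (hsol : IsSasanoSol a0 a1 a3 q1 p1 q2 p2)
    (hq1 : NoPoleAt q1 0) (hp1 : NoPoleAt p1 0)
    (hq2 : NoPoleAt q2 0) (hp2 : NoPoleAt p2 0) :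
    (evR q1 0 = 0 ∧ -(a0 + a1 + a3) * evR p1 0 + a0 = 0 ∧
      evR q2 0 = 0 ∧ -(a0 + a1 + a3) * evR p2 0 + a1 = 0) ∨
    (evR q1 0 = 0 ∧ (-a0 + a1 - a3) * evR p1 0 + a0 = 0 ∧
      evR q2 0 = a0 - a1 + a3 ∧ (-a0 + a1 - a3) * evR p2 0 - a1 = 0) ∨
    (evR q1 0 = -a0 + a1 + a3 ∧ (a0 - a1 - a3) * evR p1 0 - a0 = 0 ∧
      evR q2 0 = 0 ∧ (a0 - a1 - a3) * evR p2 0 + a1 = 0) ∨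
    (evR q1 0 = -a0 - a1 + a3 ∧ (a0 + a1 - a3) * evR p1 0 - a0 = 0 ∧
      evR q2 0 = -a0 - a1 + a3 ∧ (a0 + a1 - a3) * evR p2 0 - a1 = 0) := by
  obtain ⟨h1, h2, h3, h4⟩ := hsol 0 hq1 hp1 hq2 hp2
  generalize evR q1 0 = x at *
  generalize evR p1 0 = u at *
  generalize evR q2 0 = y at *
  generalize evR p2 0 = v at *
  simp only [zero_mul, mul_zero] at h1 h2 h3 h4
  have e1 : x = 0 ∨ 2 * x * u - x + (a0 + a1 + a3) + 2 * y * v = 0 := by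
    rw [← mul_eq_zero]; linear_combination -h1
  have e3 : y = 0 ∨ 2 * y * v - y + (a0 + a1 + a3) + 2 * x * u = 0 := by
    rw [← mul_eq_zero]; linear_combination -h3
  rcases e1 with hx | hx <;> rcases e3 with hy | hy
  · left
    subst hx hy
    refine ⟨rfl, ?_, rfl, ?_⟩
    · linear_combination -h2
    · linear_combination -h4
  · right; left
    subst hx
    have k1 : y * u = a0 := by linear_combination h2 - u * hy
    have k2 : y * v = -a1 := by linear_combination -h4 + v * hy
    have k3 : y = a0 - a1 + a3 := by linear_combination -hy + 2 * k2
    refine ⟨rfl, ?_, k3, ?_⟩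
    · linear_combination u * k3 - k1
    · linear_combination v * k3 - k2
  · right; right; left
    subst hy
    have k1 : x * u = -a0 := by linear_combination -h2 + u * hx
    have k2 : x * v = a1 := by linear_combination h4 - v * hx
    have k3 : x = -a0 + a1 + a3 := by linear_combination -hx + 2 * k1
    refine ⟨k3, ?_, rfl, ?_⟩
    · linear_combination u * k3 - k1
    · linear_combination v * k3 - k2
  · right; right; right
    have k1 : x * u = -a0 := by linear_combination -h2 + u * hx
    have k2 : y * v = -a1 := by linear_combination -h4 + v * hy
    have k3 : x = -a0 - a1 + a3 := by linear_combination -hx + 2 * k1 + 2 * k2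
    have k4 : y = -a0 - a1 + a3 := by linear_combination -hy + 2 * k1 + 2 * k2
    refine ⟨k3, ?_, k4, ?_⟩
    · linear_combination u * k3 - k1
    · linear_combination v * k4 - k2
end

section
/- Let (q1,p1,q2,p2) be a rational solution of A5^(2)(α0,α1,α2,α3) such that p1 has a pole at 0 and none of q1, q2, p2 has a pole at 0. Then (4α1−1)(4α1+1) ≠ 0, p1 has a simple pole at 0 with residue (4α1−1)(4α1+1)/16 (i.e., t·p1(t) → (4α1−1)(4α1+1)/16 as t → 0), q1(0) = 0, the derivative of q1 at 0 equals (−8α0−8α3+6)/((4α1−1)(4α1+1)), q2(0) = −2α1 + 1/2, and p2(0) = 1/4. -/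
open Filter Topology Polynomial

/-- Passing to the limit in an eventual identity between functions continuous at `0`. -/
lemma sasano_lim {f g : ℂ → ℂ} (hf : ContinuousAt f 0) (hg : ContinuousAt g 0)
    (h : ∀ᶠ t in 𝓝[≠] (0 : ℂ), f t = g t) : f 0 = g 0 :=
  tendsto_nhds_unique ((hf.tendsto.mono_left nhdsWithin_le_nhds).congr' h)
    (hg.tendsto.mono_left nhdsWithin_le_nhds)

lemma sasano_poly (p : ℂ[X]) (c : ℂ) : AnalyticAt ℂ (fun t => p.eval t) c := by
  simpa using AnalyticOnNhd.aeval_polynomial (analyticOnNhd_id (𝕜 := ℂ)) p c (Set.mem_univ c)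

/-- A rational function is analytic where it has no pole. -/
lemma sasano_analytic {f : RatFunc ℂ} {c : ℂ} (h : NoPoleAt f c) : AnalyticAt ℂ (evR f) c := by
  have h1 : AnalyticAt ℂ (fun t => f.num.eval t) c := sasano_poly f.num c
  have h2 : AnalyticAt ℂ (fun t => f.denom.eval t) c := sasano_poly f.denom c
  exact h1.div h2 h

lemma sasano_noPole {f : RatFunc ℂ} {c : ℂ} (h : NoPoleAt f c) : ∀ᶠ t in 𝓝 c, NoPoleAt f t :=
  f.denom.continuous.continuousAt.eventually_ne h

/-- Laurent normal form at a pole at `0`. -/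
lemma sasano_pole {f : RatFunc ℂ} (h : ¬ NoPoleAt f 0) :
    ∃ (n : ℕ) (u : ℂ → ℂ), AnalyticAt ℂ u 0 ∧ u 0 ≠ 0 ∧ (∀ t, evR f t = u t / t ^ (n + 1)) ∧
      ∀ᶠ t in 𝓝[≠] (0 : ℂ), NoPoleAt f t := by
  have h0 : f.denom.eval 0 = 0 := not_not.mp h
  obtain ⟨d, hd, hnd⟩ := Polynomial.exists_eq_pow_rootMultiplicity_mul_and_not_dvd
    f.denom f.denom_ne_zero 0
  set m := f.denom.rootMultiplicity 0 with hm
  have hmpos : 0 < m := (Polynomial.rootMultiplicity_pos f.denom_ne_zero).2 h0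
  obtain ⟨n, hn⟩ : ∃ n, m = n + 1 := ⟨m - 1, by omega⟩
  have hd0 : d.eval 0 ≠ 0 := fun hh => hnd (Polynomial.dvd_iff_isRoot.2 hh)
  have hden : ∀ t, f.denom.eval t = t ^ (n + 1) * d.eval t := by
    intro t
    rw [hd, hn]; simp
  have hnum : f.num.eval 0 ≠ 0 := by
    intro hh
    obtain ⟨a, b, hab⟩ := f.isCoprime_num_denom
    have := congrArg (Polynomial.eval 0) hab
    simp [hh, h0] at this
  have h1 : AnalyticAt ℂ (fun t => f.num.eval t) 0 := sasano_poly f.num 0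
  have h2 : AnalyticAt ℂ (fun t => d.eval t) 0 := sasano_poly d 0
  refine ⟨n, fun t => f.num.eval t / d.eval t, h1.div h2 hd0, div_ne_zero hnum hd0, ?_, ?_⟩
  · intro t
    rw [evR, hden, div_div, mul_comm]
  · have h3 : ∀ᶠ t in 𝓝[≠] (0 : ℂ), d.eval t ≠ 0 :=
      (d.continuous.continuousAt.eventually_ne hd0).filter_mono nhdsWithin_le_nhds
    filter_upwards [h3, self_mem_nhdsWithin] with t ht ht0
    rw [NoPoleAt, hden]
    exact mul_ne_zero (pow_ne_zero _ ht0) ht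

theorem sasano_p1_pole_at_zero (a0 a1 a2 a3 : ℂ)
    (hpar : a0 + a1 + 2 * a2 + a3 = 1 / 2)
    (q1 p1 q2 p2 : RatFunc ℂ)
    (hsol : IsSasanoSol a0 a1 a3 q1 p1 q2 p2)
    (hp1 : ¬ NoPoleAt p1 0)
    (hq1 : NoPoleAt q1 0) (hq2 : NoPoleAt q2 0) (hp2 : NoPoleAt p2 0) :
    (4 * a1 - 1) * (4 * a1 + 1) ≠ 0 ∧
    Tendsto (fun t : ℂ => t * evR p1 t) (𝓝[≠] 0)
      (𝓝 ((4 * a1 - 1) * (4 * a1 + 1) / 16)) ∧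
    evR q1 0 = 0 ∧
    deriv (evR q1) 0 = (-8 * a0 - 8 * a3 + 6) / ((4 * a1 - 1) * (4 * a1 + 1)) ∧
    evR q2 0 = -2 * a1 + 1 / 2 ∧
    evR p2 0 = 1 / 4 := by
  obtain ⟨n, u, hu, hu0, hp, hpn⟩ := sasano_pole hp1
  have aq1 := sasano_analytic hq1
  have aq2 := sasano_analytic hq2
  have ap2 := sasano_analytic hp2
  have dp : ∀ᶠ t in 𝓝[≠] (0 : ℂ),
      t * deriv (evR p1) t * t ^ (n + 1) = t * deriv u t - (n + 1) * u t := by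
    have hp' : evR p1 = fun t => u t / t ^ (n + 1) := funext hp
    filter_upwards [hu.eventually_analyticAt.filter_mono nhdsWithin_le_nhds,
      self_mem_nhdsWithin] with t ht ht0
    have ht0 : t ≠ 0 := ht0
    have hd := ht.differentiableAt.hasDerivAt.div (hasDerivAt_pow (n + 1) t) (pow_ne_zero _ ht0)
    rw [show deriv (evR p1) t = _ from (congrArg (fun g => deriv g t) hp').trans hd.deriv]
    push_cast
    field_simp
    ring
  have hev : ∀ᶠ t in 𝓝[≠] (0 : ℂ), NoPoleAt q1 t ∧ NoPoleAt p1 t ∧ NoPoleAt q2 t ∧ NoPoleAt p2 t := by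
    filter_upwards [(sasano_noPole hq1).filter_mono nhdsWithin_le_nhds, hpn,
      (sasano_noPole hq2).filter_mono nhdsWithin_le_nhds,
      (sasano_noPole hp2).filter_mono nhdsWithin_le_nhds] with t b1 b2 b3 b4
    exact ⟨b1, b2, b3, b4⟩
  have hun : ∀ᶠ t in 𝓝[≠] (0 : ℂ), u t ≠ 0 :=
    (hu.continuousAt.eventually_ne hu0).filter_mono nhdsWithin_le_nhds
  have cq1 := aq1.continuousAt
  have cq2 := aq2.continuousAt
  have cp2 := ap2.continuousAt
  have cu := hu.continuousAt
  have cq1' := aq1.deriv.continuousAt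
  have cq2' := aq2.deriv.continuousAt
  have cp2' := ap2.deriv.continuousAt
  have cu' := hu.deriv.continuousAt
  -- `q1 = t ^ (n + 1) * w` with `w` continuous at `0`
  obtain ⟨w, cw, hw⟩ : ∃ w : ℂ → ℂ, ContinuousAt w 0 ∧
      ∀ᶠ t in 𝓝[≠] (0 : ℂ), evR q1 t = t ^ (n + 1) * w t := by
    refine ⟨fun t => (2 * evR q1 t * u t - (a0 + a1 + a3) * u t + a0 * t ^ (n + 1)
      - 2 * u t * evR q2 t * evR p2 t - (t * deriv u t - (n + 1) * u t)) / (2 * u t ^ 2), ?_, ?_⟩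
    · refine ContinuousAt.div (by fun_prop) (by fun_prop) (by simpa using hu0)
    · filter_upwards [dp, hev, hun, self_mem_nhdsWithin] with t h1 h2 h3 h4
      have h4 : t ≠ 0 := h4
      obtain ⟨-, e2, -, -⟩ := hsol t h2.1 h2.2.1 h2.2.2.1 h2.2.2.2
      rw [← h1, e2, hp]
      field_simp
      ring
  have q10 : evR q1 0 = 0 := by
    have := sasano_lim cq1 (by fun_prop) hw
    simpa using this
  -- the pole is simple
  have e3 : ∀ᶠ t in 𝓝[≠] (0 : ℂ), 4 * u t = t ^ n * (t * deriv (evR q2) t -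
      (2 * (evR q2 t) ^ 2 * evR p2 t - (evR q2 t) ^ 2 + (a0 + a1 + a3) * evR q2 t
        - t + 2 * w t * u t * evR q2 t)) := by
    filter_upwards [hev, hw, self_mem_nhdsWithin] with t h2 h3 h4
    have h4 : t ≠ 0 := h4
    obtain ⟨-, -, e, -⟩ := hsol t h2.1 h2.2.1 h2.2.2.1 h2.2.2.2
    rw [e, hp, h3]
    field_simp
    ring
  have L3 := sasano_lim (by fun_prop) (by fun_prop) e3
  have hn : n = 0 := by
    by_contra hn
    simp [hn, hu0] at L3
  subst hn
  have e1 : ∀ᶠ t in 𝓝[≠] (0 : ℂ), deriv (evR q1) t = 2 * w t ^ 2 * u t - t * w t ^ 2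
      + (a0 + a1 + a3) * w t - 1 + 4 * evR p2 t + 2 * w t * evR q2 t * evR p2 t := by
    filter_upwards [hev, hw, self_mem_nhdsWithin] with t h2 h3 h4
    have h4 : t ≠ 0 := h4
    obtain ⟨e, -, -, -⟩ := hsol t h2.1 h2.2.1 h2.2.2.1 h2.2.2.2
    apply mul_left_cancel₀ h4
    rw [e, hp, h3]
    field_simp
    ring
  have e2 : ∀ᶠ t in 𝓝[≠] (0 : ℂ), t * deriv u t - u t = -2 * w t * u t ^ 2 + 2 * t * w t * u t
      - (a0 + a1 + a3) * u t + a0 * t - 2 * u t * evR q2 t * evR p2 t := by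
    filter_upwards [dp, hev, hw, self_mem_nhdsWithin] with t h1 h2 h3 h4
    have h4 : t ≠ 0 := h4
    obtain ⟨-, e, -, -⟩ := hsol t h2.1 h2.2.1 h2.2.2.1 h2.2.2.2
    have h1' : t * deriv u t - u t = t * deriv (evR p1) t * t ^ (0 + 1) := by
      rw [h1]; push_cast; ring
    rw [h1', e, hp, h3]
    field_simp
    ring
  have e4 : ∀ᶠ t in 𝓝[≠] (0 : ℂ), t * deriv (evR p2) t =
      -2 * evR q2 t * (evR p2 t) ^ 2 + 2 * evR q2 t * evR p2 t
        - (a0 + a1 + a3) * evR p2 t + a1 - 2 * w t * u t * evR p2 t := by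
    filter_upwards [hev, hw, self_mem_nhdsWithin] with t h2 h3 h4
    have h4 : t ≠ 0 := h4
    obtain ⟨-, -, -, e⟩ := hsol t h2.1 h2.2.1 h2.2.2.1 h2.2.2.2
    rw [e, hp, h3]
    field_simp
  have L1 := sasano_lim (by fun_prop) (by fun_prop) e1
  have L2 := sasano_lim (by fun_prop) (by fun_prop) e2
  have L4 := sasano_lim (by fun_prop) (by fun_prop) e4
  have Lw : deriv (evR q1) 0 = w 0 := by
    have h1 := hasDerivAt_iff_tendsto_slope.1 aq1.differentiableAt.hasDerivAt
    have h2 : Tendsto w (𝓝[≠] 0) (𝓝 (w 0)) := cw.tendsto.mono_left nhdsWithin_le_nhds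
    refine tendsto_nhds_unique h1 (h2.congr' ?_)
    filter_upwards [hw, self_mem_nhdsWithin] with t h3 h4
    have h4 : t ≠ 0 := h4
    rw [slope_def_field, q10, h3]
    field_simp
    simp
  rw [Lw] at L1 ⊢
  have hu1 : Tendsto (fun t : ℂ => t * evR p1 t) (𝓝[≠] 0) (𝓝 (u 0)) := by
    refine (cu.tendsto.mono_left nhdsWithin_le_nhds).congr' ?_
    filter_upwards [self_mem_nhdsWithin] with t h4
    have h4 : t ≠ 0 := h4
    rw [hp]
    field_simp
    try simp
  have M2 : a0 + a1 + a3 + 2 * w 0 * u 0 + 2 * evR q2 0 * evR p2 0 = 1 := by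
    apply mul_left_cancel₀ hu0
    linear_combination L2
  have hP : evR p2 0 = 1 / 4 := by
    linear_combination (-1 / 4) * L1 - w 0 / 4 * M2
  have hQ : evR q2 0 = -2 * a1 + 1 / 2 := by
    rw [hP] at L4 M2
    linear_combination -2 * L4 + 1 / 2 * M2
  have hU : u 0 = (4 * a1 - 1) * (4 * a1 + 1) / 16 := by
    rw [hP, hQ] at L3 M2
    linear_combination 1 / 4 * L3 - (-2 * a1 + 1 / 2) / 4 * M2
  have hne : (4 * a1 - 1) * (4 * a1 + 1) ≠ 0 := by
    intro h
    rw [h] at hU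
    simp [hU] at hu0
  refine ⟨hne, hU ▸ hu1, q10, ?_, hQ, hP⟩
  rw [eq_div_iff hne]
  rw [hP, hQ, hU] at M2
  linear_combination 8 * M2
end

section
/- Let (q1,p1,q2,p2) be a rational solution of A5^(2)(α0,α1,α2,α3). Then: if p1 is identically 0 then α0 = 0; if p2 is identically 0 then α1 = 0; if q1·q2 + t is identically 0 (as a rational function of t) then α2 = 0; and if p1 + p2 − 1 is identically 0 then α3 = 0. -/
open Filter Topology Polynomial

lemma evR_add (f g : RatFunc ℂ) (t : ℂ) (hf : NoPoleAt f t) (hg : NoPoleAt g t) :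
    evR (f + g) t = evR f t + evR g t := by
  simp only [evR_eq]
  exact RatFunc.eval_add _ _ (by simpa [NoPoleAt] using hf) (by simpa [NoPoleAt] using hg)

lemma evR_mul (f g : RatFunc ℂ) (t : ℂ) (hf : NoPoleAt f t) (hg : NoPoleAt g t) :
    evR (f * g) t = evR f t * evR g t := by
  simp only [evR_eq]
  exact RatFunc.eval_mul _ _ (by simpa [NoPoleAt] using hf) (by simpa [NoPoleAt] using hg)

lemma noPole_eventually (f : RatFunc ℂ) (t : ℂ) (hf : NoPoleAt f t) :
    ∀ᶠ s in 𝓝 t, NoPoleAt f s :=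
  (f.denom.continuous.continuousAt).eventually_ne hf

lemma evR_diff (f : RatFunc ℂ) (t : ℂ) (hf : NoPoleAt f t) :
    DifferentiableAt ℂ (evR f) t :=
  (f.num.differentiableAt).div (f.denom.differentiableAt) hf

lemma exists_good (q1 p1 q2 p2 : RatFunc ℂ) : ∃ t : ℂ, t ≠ 0 ∧
    NoPoleAt q1 t ∧ NoPoleAt p1 t ∧ NoPoleAt q2 t ∧ NoPoleAt p2 t := by
  have hne : (X * (q1.denom * p1.denom * q2.denom * p2.denom) : ℂ[X]) ≠ 0 := by
    simp [RatFunc.denom_ne_zero]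
  obtain ⟨t, ht⟩ : ∃ t : ℂ, (X * (q1.denom * p1.denom * q2.denom * p2.denom) : ℂ[X]).eval t ≠ 0 := by
    by_contra! h
    exact hne (Polynomial.funext (by simpa using h))
  simp only [eval_mul, eval_X, mul_ne_zero_iff] at ht
  exact ⟨t, ht.1, ht.2.1.1.1, ht.2.1.1.2, ht.2.1.2, ht.2.2⟩

theorem sasano_degenerate_components (a0 a1 a2 a3 : ℂ)
    (hpar : a0 + a1 + 2 * a2 + a3 = 1 / 2)
    (q1 p1 q2 p2 : RatFunc ℂ)
    (hsol : IsSasanoSol a0 a1 a3 q1 p1 q2 p2) :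
    (p1 = 0 → a0 = 0) ∧
    (p2 = 0 → a1 = 0) ∧
    (q1 * q2 + RatFunc.X = 0 → a2 = 0) ∧
    (p1 + p2 - 1 = 0 → a3 = 0) := by
  obtain ⟨t, ht, h1, h2, h3, h4⟩ := exists_good q1 p1 q2 p2
  obtain ⟨e1, e2, e3, e4⟩ := hsol t h1 h2 h3 h4
  have hz : evR 0 = fun _ => 0 := by
    funext s
    simp [evR]
  refine ⟨?_, ?_, ?_, ?_⟩
  · rintro rfl
    simpa [hz] using e2.symm
  · rintro rfl
    simpa [hz] using e4.symm
  · intro h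
    have key : ∀ s, NoPoleAt q1 s → NoPoleAt q2 s → evR q1 s * evR q2 s = - s := by
      intro s hs1 hs2
      rw [← evR_mul _ _ _ hs1 hs2, eq_neg_of_add_eq_zero_left h]
      have hX : NoPoleAt RatFunc.X s := by simp [NoPoleAt]
      have hm : NoPoleAt (q1 * q2) s := by
        intro h0
        have := Polynomial.eval_dvd (x := s) (RatFunc.denom_mul_dvd q1 q2)
        rw [h0, zero_dvd_iff, eval_mul] at this
        exact mul_ne_zero hs1 hs2 this
      have := evR_add (q1 * q2) RatFunc.X s hm hX
      rw [h, hz, eq_neg_of_add_eq_zero_left h] at this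
      have h5 : evR RatFunc.X s = s := by simp [evR]
      rw [h5] at this
      linear_combination -this
    have hd : deriv (fun s => evR q1 s * evR q2 s) t = deriv (fun s => -s) t := by
      apply Filter.EventuallyEq.deriv_eq
      filter_upwards [noPole_eventually _ _ h1, noPole_eventually _ _ h3] with s hs1 hs2
      exact key s hs1 hs2
    rw [deriv_fun_mul (evR_diff _ _ h1) (evR_diff _ _ h3)] at hd
    have hn : deriv (fun s : ℂ => -s) t = -1 := (hasDerivAt_neg t).deriv
    rw [hn] at hd
    have hk := key t h1 h3
    have : t * a2 = 0 := by
      linear_combination (t * hpar + (t * hd - evR q2 t * e1 - evR q1 t * e3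
        - (4 * evR q1 t * evR p1 t + 4 * evR q2 t * evR p2 t - evR q1 t - evR q2 t
          + 2 * (a0 + a1 + a3)) * hk) / 2) / 2
    exact (mul_eq_zero.1 this).resolve_left ht
  · intro h
    have h' : p1 + p2 = 1 := sub_eq_zero.1 h
    have key : ∀ s, NoPoleAt p1 s → NoPoleAt p2 s → evR p1 s + evR p2 s = 1 := by
      intro s hs1 hs2
      rw [← evR_add _ _ _ hs1 hs2, h']
      simp [evR]
    have hd : deriv (fun s => evR p1 s + evR p2 s) t = deriv (fun _ => (1 : ℂ)) t := by
      apply Filter.EventuallyEq.deriv_eq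
      filter_upwards [noPole_eventually _ _ h2, noPole_eventually _ _ h4] with s hs1 hs2
      exact key s hs1 hs2
    rw [deriv_fun_add (evR_diff _ _ h2) (evR_diff _ _ h4), deriv_const] at hd
    have hk := key t h2 h4
    linear_combination e2 + e4 - t * hd + (-2 * evR q1 t * evR p1 t - 2 * evR q2 t * evR p2 t - (a0 + a1 + a3)) * hk
end
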